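/- arXiv:1906.00264 — 2 statements merged into one kernel-verified Lean document; each statement's English description precedes it below -/
import Mathlib

section
/- There exists an absolute constant c > 0 such that the following holds for every k ≥ 2 and every n large enough. Let V be a finite vertex set with |V| = n. There exists a single k-distinguisher g over V such that for every ε > 0 and every (k−1)-distinguishing class G_{k−1} over V: if for all probability distributions p₁, p₂ on V one has IPM_{G_{k−1}}(p₁,p₂) ≥ ε·|L_{p₁}(g) − L_{p₂}(g)|, then gVC(G_{k−1}) ≥ c·(ε²/k²)·√(log₂ n). -/
open scoped BigOperators

namespace GraphDisc

/-- A `k`-distinguisher is symmetric: invariant under all permutations of arguments. -/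
def IsSymmetric {V : Type*} {k : ℕ} (g : (Fin k → V) → Bool) : Prop :=
  ∀ (σ : Equiv.Perm (Fin k)) (w : Fin k → V), g (w ∘ σ) = g w

/-- A `k`-distinguishing class: a family of symmetric Boolean `k`-ary functions. -/
def IsDistinguishingClass {V : Type*} {k : ℕ} (G : Set ((Fin k → V) → Bool)) : Prop :=
  ∀ g ∈ G, IsSymmetric g

/-- `p` is a probability distribution on `V` (as a mass function). -/
def IsDist {V : Type*} (p : V → ℝ) : Prop := (∀ v, 0 ≤ p v) ∧ HasSum p 1

/-- `L_P(g)`: expected value of `g` on a `k`-tuple of i.i.d. samples from `p`. -/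
noncomputable def LP {V : Type*} {k : ℕ} (p : V → ℝ) (g : (Fin k → V) → Bool) : ℝ :=
  ∑' w : Fin k → V, (∏ i, p (w i)) * (if g w then 1 else 0)

/-- `L_S(g)`: empirical frequency of `g` on all `k`-tuples from the sample `S`. -/
noncomputable def LS {V : Type*} {k m : ℕ} (S : Fin m → V) (g : (Fin k → V) → Bool) : ℝ :=
  (∑ t : Fin k → Fin m, if g (S ∘ t) then (1 : ℝ) else 0) / (m : ℝ) ^ k

/-- Probability of an event `E` under an i.i.d. sample of size `m` from `p`. -/
noncomputable def Prob {V : Type*} (p : V → ℝ) {m : ℕ} (E : Set (Fin m → V)) : ℝ :=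
  ∑' S : Fin m → V, E.indicator (fun S => ∏ i, p (S i)) S

/-- Probability of an event `E` under two independent i.i.d. samples of size `m`. -/
noncomputable def Prob2 {V : Type*} (p₁ p₂ : V → ℝ) {m : ℕ}
    (E : Set ((Fin m → V) × (Fin m → V))) : ℝ :=
  ∑' S : (Fin m → V) × (Fin m → V),
    E.indicator (fun S => (∏ i, p₁ (S.1 i)) * ∏ i, p₂ (S.2 i)) S

/-- IPM distance induced by a class of `k`-ary distinguishers. -/
noncomputable def IPM {V : Type*} {k : ℕ} (G : Set ((Fin k → V) → Bool))
    (p₁ p₂ : V → ℝ) : ℝ :=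
  ⨆ g ∈ G, |LP p₁ g - LP p₂ g|

/-- `L_P(d)` for a unary Boolean function `d`. -/
noncomputable def LP1 {V : Type*} (p : V → ℝ) (d : V → Bool) : ℝ :=
  ∑' v : V, p v * (if d v then 1 else 0)

/-- IPM distance for a family of unary Boolean functions. -/
noncomputable def IPM1 {V : Type*} (D : Set (V → Bool)) (p₁ p₂ : V → ℝ) : ℝ :=
  ⨆ d ∈ D, |LP1 p₁ d - LP1 p₂ d|

/-- `L_P(g)` for a binary (curried) Boolean function `g`. -/
noncomputable def LP2 {V : Type*} (p : V → ℝ) (g : V → V → Bool) : ℝ :=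
  ∑' w : V × V, (p w.1 * p w.2) * (if g w.1 w.2 then 1 else 0)

/-- `D` shatters the finite set `T`: every Boolean pattern on `T` is realized in `D`. -/
def Shatters {X : Type*} (D : Set (X → Bool)) (T : Finset X) : Prop :=
  ∀ f : X → Bool, ∃ d ∈ D, ∀ x ∈ T, d x = f x

/-- The VC dimension of a family of Boolean functions. -/
noncomputable def vcDim {X : Type*} (D : Set (X → Bool)) : ℕ∞ :=
  ⨆ T ∈ {T : Finset X | Shatters D T}, (T.card : ℕ∞)

/-- Fixing the first argument of a `(k+1)`-ary function to `v`. -/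
def proj {V : Type*} {k : ℕ} (v : V) (g : (Fin (k + 1) → V) → Bool) :
    (Fin k → V) → Bool := fun u => g (Fin.cons v u)

/-- The graph VC dimension, defined inductively: for `k = 1` it is the usual VC
dimension; for `k > 1` it is the supremum over `v` of the graph VC dimension of the
projected class `G_v`. -/
noncomputable def gvcDim {V : Type*} : (k : ℕ) → Set ((Fin k → V) → Bool) → ℕ∞
  | 0, G => vcDim G
  | 1, G => vcDim G
  | (k + 2), G => ⨆ v : V, gvcDim (k + 1) (proj v '' G)

open Classical in
/-- Mixture `q·δ_v + (1−q)·p`. -/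
noncomputable def mix {V : Type*} (q : ℝ) (v : V) (p : V → ℝ) : V → ℝ :=
  fun u => q * (if u = v then 1 else 0) + (1 - q) * p u

/-- The class of majority-vote threshold functions over `m`-tuples from `D`. -/
noncomputable def thresholdClass {V : Type*} (D : Set (V → Bool)) (m : ℕ) :
    Set (V → Bool) :=
  {h | ∃ d : Fin m → (V → Bool), (∀ i, d i ∈ D) ∧
        h = fun v => decide ((0 : ℝ) ≤ ∑ i, (2 * (if d i v then (1 : ℝ) else 0) - 1))}


lemma threshold_of_sep {s m : ℕ} (f : Fin s → Bool) (cnt : Fin s → ℕ) (hm : ∀ y, cnt y ≤ m)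
    (hsep : ∀ x y, f x = true → f y = false → cnt y < cnt x) :
    ∃ θ : Fin (m + 2), ∀ y, f y = decide ((θ : ℕ) ≤ cnt y) := by
  classical
  have hex : ∃ θ : ℕ, ∀ y, f y = false → cnt y < θ := ⟨m + 1, fun y _ => by have := hm y; omega⟩
  have hle : Nat.find hex ≤ m + 1 := Nat.find_min' hex (fun y _ => by have := hm y; omega)
  refine ⟨⟨Nat.find hex, by omega⟩, fun y => ?_⟩
  cases hy : f y with
  | false =>
    have := Nat.find_spec hex y hy
    symm
    simp only [decide_eq_false_iff_not]
    omega
  | true =>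
    have : Nat.find hex ≤ cnt y := Nat.find_min' hex (fun z hz => hsep y z hy hz)
    symm
    simpa using this

lemma exp_step {s : ℕ} (ξ : Fin s → ℝ) (d : Fin s → ℝ) (h0 : ∀ y, 0 ≤ ξ y) (hs : ∑ y, ξ y = 1)
    (hd : ∀ y, d y = 0 ∨ d y = 1) (z : ℝ) (hz : |z| ≤ 1) :
    ∑ y, ξ y * Real.exp (z * d y) ≤ Real.exp (z * ∑ y, ξ y * d y + z ^ 2) := by
  have h1 : ∀ y, Real.exp (z * d y) ≤ 1 + z * d y + z ^ 2 := by
    intro y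
    rcases hd y with h | h
    · rw [h]; simp; positivity
    · rw [h, mul_one]
      have := (abs_le.mp (Real.abs_exp_sub_one_sub_id_le hz)).2
      linarith
  calc ∑ y, ξ y * Real.exp (z * d y) ≤ ∑ y, ξ y * (1 + z * d y + z ^ 2) :=
        Finset.sum_le_sum fun y _ => mul_le_mul_of_nonneg_left (h1 y) (h0 y)
    _ = (z * ∑ y, ξ y * d y + z ^ 2) + 1 := by
        have : ∀ y, ξ y * (1 + z * d y + z ^ 2) = ξ y * (1 + z ^ 2) + z * (ξ y * d y) := by
          intro y; ring
        simp_rw [this]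
        rw [Finset.sum_add_distrib, ← Finset.sum_mul, ← Finset.mul_sum, hs]; ring
    _ ≤ _ := Real.add_one_le_exp _

lemma boost_pot {s : ℕ} {ι : Type*} (f : Fin s → Bool) (e : ι → Fin s → Bool) (δ : ℝ)
    (hδ : 0 < δ) (hδ1 : δ ≤ 1)
    (hw : ∀ ξ₁ ξ₂ : Fin s → ℝ, (∀ y, 0 ≤ ξ₁ y) → (∀ y, 0 ≤ ξ₂ y) → ∑ y, ξ₁ y = 1 →
      ∑ y, ξ₂ y = 1 → (∀ y, f y = false → ξ₁ y = 0) → (∀ y, f y = true → ξ₂ y = 0) →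
      ∃ i, δ ≤ ∑ y, (ξ₁ y - ξ₂ y) * (if e i y then 1 else 0))
    (h1 : ∃ y, f y = true) (h0 : ∃ y, f y = false) (m : ℕ) :
    ∃ c : Fin m → ι,
      (∑ y, if f y then Real.exp (-(δ / 4) * ∑ j, if e (c j) y then (1 : ℝ) else 0) else 0) *
      (∑ y, if f y then 0 else Real.exp ((δ / 4) * ∑ j, if e (c j) y then (1 : ℝ) else 0))
      ≤ (s : ℝ) ^ 2 * Real.exp (-(m * (δ ^ 2 / 8))) := by
  induction m with
  | zero =>
    refine ⟨Fin.elim0, ?_⟩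
    have hb : ∀ g : Fin s → ℝ, (∀ y, 0 ≤ g y) → (∀ y, g y ≤ 1) → 0 ≤ ∑ y, g y ∧ ∑ y, g y ≤ s := by
      intro g hg hg'
      refine ⟨Finset.sum_nonneg fun y _ => hg y, ?_⟩
      calc ∑ y, g y ≤ ∑ y : Fin s, (1 : ℝ) := Finset.sum_le_sum fun y _ => hg' y
        _ = s := by simp
    obtain ⟨a1, a2⟩ := hb (fun y => if f y then (1 : ℝ) else 0)
      (fun y => by split_ifs <;> norm_num) (fun y => by split_ifs <;> norm_num)
    obtain ⟨b1, b2⟩ := hb (fun y => if f y then (0 : ℝ) else 1)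
      (fun y => by split_ifs <;> norm_num) (fun y => by split_ifs <;> norm_num)
    simp only [Finset.univ_eq_empty, Finset.sum_empty, mul_zero, Real.exp_zero, Nat.cast_zero,
      zero_mul, neg_zero, mul_one]
    rw [sq]
    exact mul_le_mul a2 b2 b1 (by positivity)
  | succ m ih =>
    obtain ⟨c, hc⟩ := ih
    set S : Fin s → ℝ := fun y => ∑ j, if e (c j) y then (1 : ℝ) else 0 with hS
    set w1 : Fin s → ℝ := fun y => if f y then Real.exp (-(δ / 4) * S y) else 0 with hw1
    set w0 : Fin s → ℝ := fun y => if f y then 0 else Real.exp ((δ / 4) * S y) with hw0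
    change (∑ y, w1 y) * (∑ y, w0 y) ≤ _ at hc
    have w1n : ∀ y, 0 ≤ w1 y := fun y => by simp only [hw1]; split_ifs <;> positivity
    have w0n : ∀ y, 0 ≤ w0 y := fun y => by simp only [hw0]; split_ifs <;> positivity
    have W1 : 0 < ∑ y, w1 y := by
      obtain ⟨y, hy⟩ := h1
      refine Finset.sum_pos' (fun y _ => w1n y) ⟨y, Finset.mem_univ _, ?_⟩
      simp only [hw1, hy, if_true]; positivity
    have W0 : 0 < ∑ y, w0 y := by
      obtain ⟨y, hy⟩ := h0
      refine Finset.sum_pos' (fun y _ => w0n y) ⟨y, Finset.mem_univ _, ?_⟩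
      simp only [hw0, hy]; simp; positivity
    have s1 : ∑ y, w1 y / (∑ y, w1 y) = 1 := by rw [← Finset.sum_div]; exact div_self W1.ne'
    have s0 : ∑ y, w0 y / (∑ y, w0 y) = 1 := by rw [← Finset.sum_div]; exact div_self W0.ne'
    have n1 : ∀ y, 0 ≤ w1 y / (∑ y, w1 y) := fun y => div_nonneg (w1n y) W1.le
    have n0 : ∀ y, 0 ≤ w0 y / (∑ y, w0 y) := fun y => div_nonneg (w0n y) W0.le
    obtain ⟨i, hi⟩ := hw (fun y => w1 y / ∑ y, w1 y) (fun y => w0 y / ∑ y, w0 y) n1 n0 s1 s0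
      (fun y hy => by simp [hw1, hy]) (fun y hy => by simp [hw0, hy])
    refine ⟨Fin.snoc c i, ?_⟩
    set d : Fin s → ℝ := fun y => if e i y then (1 : ℝ) else 0 with hd
    have hd01 : ∀ y, d y = 0 ∨ d y = 1 := fun y => by simp only [hd]; split_ifs <;> simp
    have hq : |(-(δ / 4))| ≤ 1 := by rw [abs_neg, abs_of_pos (by positivity)]; linarith
    have hq' : |δ / 4| ≤ 1 := by rw [abs_of_pos (by positivity)]; linarith
    have e1 := exp_step _ d n1 s1 hd01 (-(δ / 4)) hq
    have e0 := exp_step _ d n0 s0 hd01 (δ / 4) hq'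
    have t1 : (∑ y, if f y then Real.exp (-(δ / 4) * ∑ j, if e ((Fin.snoc c i : Fin (m+1) → ι) j) y then (1 : ℝ) else 0) else 0)
        = (∑ y, w1 y) * ∑ y, w1 y / (∑ y, w1 y) * Real.exp (-(δ / 4) * d y) := by
      rw [Finset.mul_sum]
      refine Finset.sum_congr rfl fun y _ => ?_
      rw [← mul_assoc, mul_div_cancel₀ _ W1.ne']
      simp only [Fin.sum_univ_castSucc, Fin.snoc_castSucc, Fin.snoc_last, hw1]
      by_cases hf : f y = true
      · rw [if_pos hf, if_pos hf, ← Real.exp_add, ← mul_add]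
      · rw [if_neg hf, if_neg hf, zero_mul]
    have t0 : (∑ y, if f y then 0 else Real.exp ((δ / 4) * ∑ j, if e ((Fin.snoc c i : Fin (m+1) → ι) j) y then (1 : ℝ) else 0))
        = (∑ y, w0 y) * ∑ y, w0 y / (∑ y, w0 y) * Real.exp ((δ / 4) * d y) := by
      rw [Finset.mul_sum]
      refine Finset.sum_congr rfl fun y _ => ?_
      rw [← mul_assoc, mul_div_cancel₀ _ W0.ne']
      simp only [Fin.sum_univ_castSucc, Fin.snoc_castSucc, Fin.snoc_last, hw0]
      by_cases hf : f y = true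
      · rw [if_pos hf, if_pos hf, zero_mul]
      · rw [if_neg hf, if_neg hf, ← Real.exp_add, ← mul_add]
    rw [t1, t0]
    set E1 := ∑ y, w1 y / (∑ y, w1 y) * Real.exp (-(δ / 4) * d y)
    set E0 := ∑ y, w0 y / (∑ y, w0 y) * Real.exp ((δ / 4) * d y)
    have E0n : 0 ≤ E0 := Finset.sum_nonneg fun y _ => mul_nonneg (n0 y) (Real.exp_nonneg _)
    have hE : E1 * E0 ≤ Real.exp (-(δ ^ 2 / 8)) := by
      refine (mul_le_mul e1 e0 E0n (Real.exp_nonneg _)).trans ?_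
      rw [← Real.exp_add]
      apply Real.exp_le_exp.mpr
      simp only [sub_mul, Finset.sum_sub_distrib] at hi
      nlinarith
    calc (∑ y, w1 y) * E1 * ((∑ y, w0 y) * E0) = ((∑ y, w1 y) * (∑ y, w0 y)) * (E1 * E0) := by ring
      _ ≤ ((s : ℝ) ^ 2 * Real.exp (-(m * (δ ^ 2 / 8)))) * Real.exp (-(δ ^ 2 / 8)) :=
        mul_le_mul hc hE (mul_nonneg (Finset.sum_nonneg fun y _ => mul_nonneg (n1 y) (Real.exp_nonneg _)) E0n) (by positivity)
      _ = _ := by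
        rw [mul_assoc, ← Real.exp_add]; congr 2; push_cast; ring

lemma boost {s : ℕ} {ι : Type*} [Nonempty ι] (f : Fin s → Bool) (e : ι → Fin s → Bool) (δ : ℝ)
    (hδ : 0 < δ) (hδ1 : δ ≤ 1)
    (hw : ∀ ξ₁ ξ₂ : Fin s → ℝ, (∀ y, 0 ≤ ξ₁ y) → (∀ y, 0 ≤ ξ₂ y) → ∑ y, ξ₁ y = 1 →
      ∑ y, ξ₂ y = 1 → (∀ y, f y = false → ξ₁ y = 0) → (∀ y, f y = true → ξ₂ y = 0) →
      ∃ i, δ ≤ ∑ y, (ξ₁ y - ξ₂ y) * (if e i y then 1 else 0)) (m : ℕ)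
    (hm : (s : ℝ) ^ 2 * Real.exp (-(m * (δ ^ 2 / 8))) < 1) :
    ∃ (c : Fin m → ι) (θ : Fin (m + 2)), ∀ y, f y =
      decide ((θ : ℕ) ≤ (Finset.univ.filter fun j => e (c j) y = true).card) := by
  have main : ∃ c : Fin m → ι, ∀ x y, f x = true → f y = false →
      (Finset.univ.filter fun j => e (c j) y = true).card <
      (Finset.univ.filter fun j => e (c j) x = true).card := by
    by_cases h1 : ∃ y, f y = true
    · by_cases h0 : ∃ y, f y = false
      · obtain ⟨c, hc⟩ := boost_pot f e δ hδ hδ1 hw h1 h0 m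
        refine ⟨c, fun x y hx hy => ?_⟩
        have hlt := lt_of_le_of_lt hc hm
        by_contra hcon
        push Not at hcon
        have hS : ∀ y, (∑ j, if e (c j) y then (1 : ℝ) else 0) =
            ((Finset.univ.filter fun j => e (c j) y = true).card : ℝ) := by
          intro y; simp
        have k1 : Real.exp (-(δ / 4) * ∑ j, if e (c j) x then (1 : ℝ) else 0) ≤
            ∑ y, if f y then Real.exp (-(δ / 4) * ∑ j, if e (c j) y then (1 : ℝ) else 0) else 0 := by
          have := Finset.single_le_sum (f := fun y => if f y then Real.exp (-(δ / 4) * ∑ j, if e (c j) y then (1 : ℝ) else 0) else 0)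
            (fun y _ => by split_ifs <;> positivity) (Finset.mem_univ x)
          simpa only [hx, if_true] using this
        have k0 : Real.exp ((δ / 4) * ∑ j, if e (c j) y then (1 : ℝ) else 0) ≤
            ∑ y, if f y then 0 else Real.exp ((δ / 4) * ∑ j, if e (c j) y then (1 : ℝ) else 0) := by
          have := Finset.single_le_sum (f := fun y => if f y then 0 else Real.exp ((δ / 4) * ∑ j, if e (c j) y then (1 : ℝ) else 0))
            (fun y _ => by split_ifs <;> positivity) (Finset.mem_univ y)
          simpa only [hy, Bool.false_eq_true, if_false] using this
        have k := mul_le_mul k1 k0 (Real.exp_nonneg _) ((Real.exp_nonneg _).trans k1)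
        rw [← Real.exp_add, hS, hS] at k
        have hcon' : ((Finset.univ.filter fun j => e (c j) x = true).card : ℝ) ≤
          ((Finset.univ.filter fun j => e (c j) y = true).card : ℝ) := by exact_mod_cast hcon
        have : (1 : ℝ) ≤ Real.exp (-(δ / 4) * ((Finset.univ.filter fun j => e (c j) x = true).card : ℝ) + δ / 4 * ((Finset.univ.filter fun j => e (c j) y = true).card : ℝ)) := by
          apply Real.one_le_exp
          nlinarith
        linarith
      · exact ⟨fun _ => Classical.arbitrary ι, fun x y _ hy => absurd ⟨y, hy⟩ h0⟩
    · exact ⟨fun _ => Classical.arbitrary ι, fun x y hx _ => absurd ⟨x, hx⟩ h1⟩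
  obtain ⟨c, hc⟩ := main
  obtain ⟨θ, hθ⟩ := threshold_of_sep (m := m) f _
    (fun y => (Finset.card_le_univ _).trans (by simp)) hc
  exact ⟨c, θ, hθ⟩
lemma shatter_bound {V : Type*} {ρ : ℕ} : ∀ (κ : ℕ) (G : Set ((Fin (κ + 1) → V) → Bool)),
    gvcDim (κ + 1) G ≤ (ρ : ℕ∞) → ∀ (u : Fin κ → V) (T : Finset V),
    (∀ f : V → Bool, ∃ h ∈ G, ∀ x ∈ T, h (Fin.snoc u x : Fin (κ + 1) → V) = f x) → T.card ≤ ρ := by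
  intro κ
  induction κ with
  | zero =>
    intro G hG u T hT
    have hG' : vcDim G ≤ (ρ : ℕ∞) := hG
    let emb : V ↪ (Fin 1 → V) := ⟨fun x _ => x, fun x y h => congrFun h 0⟩
    have hsh : T.map emb ∈ {T : Finset (Fin 1 → V) | Shatters G T} := by
      intro f
      obtain ⟨h, hh, hx⟩ := hT (fun x => f (emb x))
      refine ⟨h, hh, fun w hw => ?_⟩
      obtain ⟨x, hxT, rfl⟩ := Finset.mem_map.mp hw
      rw [← hx x hxT]
      congr 1
    have h1 : ((T.map emb).card : ℕ∞) ≤ vcDim G :=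
      le_iSup₂ (f := fun (T : Finset (Fin 1 → V)) (_ : T ∈ {T : Finset (Fin 1 → V) | Shatters G T}) => (T.card : ℕ∞)) _ hsh
    have := h1.trans hG'
    rw [Finset.card_map] at this
    exact_mod_cast this
  | succ κ ih =>
    intro G hG u T hT
    have hG' : (⨆ v : V, gvcDim (κ + 1) (proj v '' G)) ≤ (ρ : ℕ∞) := hG
    refine ih (proj (u 0) '' G) ((le_iSup (fun v => gvcDim (κ + 1) (proj v '' G)) (u 0)).trans hG')
      (Fin.tail u) T ?_
    intro f
    obtain ⟨h, hh, hx⟩ := hT f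
    refine ⟨_, ⟨h, hh, rfl⟩, fun x hxT => ?_⟩
    rw [← hx x hxT]
    unfold proj
    rw [Fin.cons_snoc_eq_snoc_cons, Fin.cons_self_tail]

lemma sum_choose_le (s ρ : ℕ) : ∑ k ∈ Finset.Iic ρ, s.choose k ≤ (s + 1) ^ ρ := by
  rw [add_pow, ← Nat.range_succ_eq_Iic]
  refine Finset.sum_le_sum fun k hk => ?_
  have hk' : k ≤ ρ := by simpa [Nat.lt_succ_iff] using hk
  have h1 := Nat.choose_le_pow s k
  have h2 : 1 ≤ ρ.choose k := Nat.choose_pos hk'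
  simp only [one_pow, mul_one]
  nlinarith [Nat.zero_le (s ^ k)]

lemma patterns {V : Type*} {ρ κ s : ℕ} (G : Set ((Fin (κ + 1) → V) → Bool))
    (hG : gvcDim (κ + 1) G ≤ (ρ : ℕ∞)) (φ : Fin s → V) (hφ : Function.Injective φ)
    (u : Fin κ → V) :
    ∃ T : Fin ((s + 1) ^ ρ) → Fin s → Bool, ∀ h ∈ G, ∃ i, ∀ y,
      T i y = h (Fin.snoc u (φ y) : Fin (κ + 1) → V) := by
  classical
  let 𝒜 : Finset (Finset (Fin s)) := Finset.univ.filter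
    (fun A => ∃ h ∈ G, ∀ y, y ∈ A ↔ h (Fin.snoc u (φ y) : Fin (κ + 1) → V) = true)
  have hvc : 𝒜.vcDim ≤ ρ := by
    refine Finset.sup_le fun S hS => ?_
    rw [Finset.mem_shatterer] at hS
    rw [← Finset.card_map ⟨φ, hφ⟩]
    refine shatter_bound κ G hG u _ fun f => ?_
    obtain ⟨A, hA, hSA⟩ := hS (t := S.filter fun y => f (φ y) = true) (Finset.filter_subset _ _)
    obtain ⟨h, hh, hA⟩ := (Finset.mem_filter.mp hA).2
    refine ⟨h, hh, fun x hx => ?_⟩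
    obtain ⟨y, hy, rfl⟩ := Finset.mem_map.mp hx
    have h1 : y ∈ S ∩ A ↔ y ∈ S.filter fun y => f (φ y) = true := by rw [hSA]
    simp only [Finset.mem_inter, Finset.mem_filter, hy, true_and, hA] at h1
    exact Bool.eq_iff_iff.mpr h1
  have hcard : 𝒜.card ≤ (s + 1) ^ ρ := by
    refine (Finset.card_le_card_shatterer 𝒜).trans (Finset.card_shatterer_le_sum_vcDim.trans ?_)
    rw [Fintype.card_fin]
    refine le_trans ?_ (sum_choose_le s ρ)
    exact Finset.sum_le_sum_of_subset (Finset.Iic_subset_Iic.mpr hvc)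
  refine ⟨fun i y => if hi : (i : ℕ) < 𝒜.card then
    decide (y ∈ (𝒜.equivFin.symm ⟨i, hi⟩ : Finset (Fin s))) else false, fun h hh => ?_⟩
  let A : Finset (Fin s) := Finset.univ.filter
    fun y => h (Fin.snoc u (φ y) : Fin (κ + 1) → V) = true
  have hA : A ∈ 𝒜 := by
    simp only [𝒜, Finset.mem_filter, Finset.mem_univ, true_and]
    exact ⟨h, hh, fun y => by simp [A]⟩
  have hlt := (𝒜.equivFin ⟨A, hA⟩).2
  refine ⟨⟨𝒜.equivFin ⟨A, hA⟩, hlt.trans_le hcard⟩, fun y => ?_⟩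
  simp only [hlt, dif_pos, Fin.eta, Equiv.symm_apply_apply]
  simp [A]
lemma LP_push {V Z : Type*} [Fintype V] [Fintype Z] [DecidableEq V] (φ : Z → V) (ω : Z → ℝ) {k : ℕ}
    (h : (Fin k → V) → Bool) :
    LP (fun v => ∑ z, if φ z = v then ω z else 0) h =
      ∑ z : Fin k → Z, (∏ i, ω (z i)) * (if h (φ ∘ z) then 1 else 0) := by
  classical
  unfold LP
  rw [tsum_fintype]
  have h1 : ∀ w : Fin k → V, (∏ i, ∑ z, if φ z = w i then ω z else 0) =
      ∑ z : Fin k → Z, ∏ i, (if φ (z i) = w i then ω (z i) else 0) := by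
    intro w
    rw [Finset.prod_univ_sum, Fintype.piFinset_univ]
  simp_rw [h1, Finset.sum_mul]
  rw [Finset.sum_comm]
  refine Finset.sum_congr rfl fun z _ => ?_
  rw [Finset.sum_eq_single (φ ∘ z)]
  · simp
  · intro w _ hw
    have : ∃ i, φ (z i) ≠ w i := by
      by_contra hcon
      push Not at hcon
      exact hw (funext fun i => (hcon i).symm)
    obtain ⟨i, hi⟩ := this
    rw [Finset.prod_eq_zero (Finset.mem_univ i) (if_neg hi), zero_mul]
  · intro hh; exact absurd (Finset.mem_univ _) hh

lemma isDist_push {V Z : Type*} [Fintype V] [Fintype Z] [DecidableEq V] (φ : Z → V) (ω : Z → ℝ)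
    (h0 : ∀ z, 0 ≤ ω z) (h1 : ∑ z, ω z = 1) :
    IsDist (fun v => ∑ z, if φ z = v then ω z else 0) := by
  refine ⟨fun v => Finset.sum_nonneg fun z _ => by split_ifs <;> simp [h0], ?_⟩
  have : ∑ v, ∑ z, (if φ z = v then ω z else 0) = 1 := by
    rw [Finset.sum_comm]; simpa using h1
  rw [← this]
  exact hasSum_fintype _

/-- Mixed term of the expansion. -/
noncomputable def mixS {Z : Type*} [Fintype Z] {n : ℕ} (l x : Z → ℝ) (H : (Fin n → Z) → ℝ)
    (τ : Finset (Fin n)) : ℝ :=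
  ∑ z : Fin n → Z, (∏ i, if i ∈ τ then x (z i) else l (z i)) * H z

lemma expand {Z : Type*} [Fintype Z] {n : ℕ} (l x : Z → ℝ) (H : (Fin n → Z) → ℝ) :
    ∑ z : Fin n → Z, (∏ i, (x (z i) + l (z i))) * H z =
      ∑ τ : Finset (Fin n), mixS l x H τ := by
  classical
  unfold mixS
  rw [Finset.sum_comm]
  refine Finset.sum_congr rfl fun z _ => ?_
  rw [Finset.prod_add, Finset.powerset_univ, Finset.sum_mul]
  refine Finset.sum_congr rfl fun τ _ => ?_
  congr 1
  have := Finset.prod_piecewise Finset.univ τ (fun i => x (z i)) (fun i => l (z i))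
  simp only [Finset.univ_inter] at this
  rw [← this]
  rfl

lemma mixS_bound {Z : Type*} [Fintype Z] {n : ℕ} (l x : Z → ℝ) (H : (Fin n → Z) → ℝ)
    (τ : Finset (Fin n)) (β : ℝ) (hl0 : ∀ z, 0 ≤ l z) (hx0 : ∀ z, 0 ≤ x z)
    (hl : ∑ z, l z ≤ 1) (hx : ∑ z, x z = β) (hH0 : ∀ z, 0 ≤ H z) (hH1 : ∀ z, H z ≤ 1) :
    0 ≤ mixS l x H τ ∧ mixS l x H τ ≤ β ^ τ.card := by
  classical
  have hn : ∀ z : Fin n → Z, 0 ≤ ∏ i, if i ∈ τ then x (z i) else l (z i) := fun z =>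
    Finset.prod_nonneg fun i _ => by split_ifs <;> simp [hx0, hl0]
  refine ⟨Finset.sum_nonneg fun z _ => mul_nonneg (hn z) (hH0 z), ?_⟩
  calc mixS l x H τ ≤ ∑ z : Fin n → Z, ∏ i, (if i ∈ τ then x (z i) else l (z i)) :=
        Finset.sum_le_sum fun z _ => mul_le_of_le_one_right (hn z) (hH1 z)
    _ = ∏ i, ∑ z, (if i ∈ τ then x z else l z) := by
        rw [Finset.prod_univ_sum, Fintype.piFinset_univ]
    _ ≤ ∏ i : Fin n, (if i ∈ τ then β else 1) := by
        refine Finset.prod_le_prod (fun i _ => Finset.sum_nonneg fun z _ => by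
          split_ifs <;> simp [hx0, hl0]) fun i _ => ?_
        split_ifs
        · exact hx.le
        · exact hl
    _ = β ^ τ.card := by rw [Finset.prod_ite_mem]; simp

lemma mixS_single {Z : Type*} [Fintype Z] {κ : ℕ} (l x : Z → ℝ) (H : (Fin (κ + 1) → Z) → ℝ)
    (hsym : ∀ (σ : Equiv.Perm (Fin (κ + 1))) z, H (z ∘ σ) = H z) (i : Fin (κ + 1)) :
    mixS l x H {i} = ∑ z : Fin κ → Z, ∑ y, (∏ j, l (z j)) * x y * H (Fin.snoc z y : Fin (κ + 1) → Z) := by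
  classical
  have h1 : mixS l x H {i} = mixS l x H {Fin.last κ} := by
    unfold mixS
    rw [← Equiv.sum_comp (Equiv.arrowCongr (Equiv.swap i (Fin.last κ)) (Equiv.refl Z))]
    refine Finset.sum_congr rfl fun z _ => ?_
    have e : (Equiv.arrowCongr (Equiv.swap i (Fin.last κ)) (Equiv.refl Z)) z =
      z ∘ (Equiv.swap i (Fin.last κ)) := by
      funext j; simp [Equiv.arrowCongr]
    rw [e, hsym]
    congr 1
    rw [← Equiv.prod_comp (Equiv.swap i (Fin.last κ))]
    refine Finset.prod_congr rfl fun j _ => ?_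
    simp only [Function.comp, Equiv.swap_apply_self, Finset.mem_singleton]
    have : (Equiv.swap i (Fin.last κ)) j = i ↔ j = Fin.last κ := by
      rw [Equiv.swap_apply_eq_iff, Equiv.swap_apply_left]
    simp only [this]
  rw [h1]
  unfold mixS
  rw [← Equiv.sum_comp (Fin.snocEquiv (fun _ => Z)), Fintype.sum_prod_type, Finset.sum_comm]
  refine Finset.sum_congr rfl fun z _ => Finset.sum_congr rfl fun y _ => ?_
  rw [Fin.prod_univ_castSucc]
  simp [Fin.snocEquiv, Fin.castSucc_ne_last]

lemma diff_bound {Z : Type*} [Fintype Z] {κ : ℕ} (l x₁ x₂ : Z → ℝ) (H : (Fin (κ + 1) → Z) → ℝ)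
    (hsym : ∀ (σ : Equiv.Perm (Fin (κ + 1))) z, H (z ∘ σ) = H z)
    (β : ℝ) (hβ : 0 ≤ β) (hβ1 : β ≤ 1) (hl0 : ∀ z, 0 ≤ l z) (hx10 : ∀ z, 0 ≤ x₁ z) (hx20 : ∀ z, 0 ≤ x₂ z)
    (hl : ∑ z, l z ≤ 1) (hx1 : ∑ z, x₁ z = β) (hx2 : ∑ z, x₂ z = β)
    (hH0 : ∀ z, 0 ≤ H z) (hH1 : ∀ z, H z ≤ 1) :
    |(∑ z : Fin (κ + 1) → Z, (∏ i, (x₁ (z i) + l (z i))) * H z) -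
      (∑ z : Fin (κ + 1) → Z, (∏ i, (x₂ (z i) + l (z i))) * H z)| ≤
    (κ + 1) * |∑ z : Fin κ → Z, ∑ y, (∏ j, l (z j)) * (x₁ y - x₂ y) * H (Fin.snoc z y : Fin (κ + 1) → Z)|
      + 2 ^ (κ + 1) * β ^ 2 := by
  classical
  rw [expand, expand, ← Finset.sum_sub_distrib]
  set D := |∑ z : Fin κ → Z, ∑ y, (∏ j, l (z j)) * (x₁ y - x₂ y) * H (Fin.snoc z y : Fin (κ + 1) → Z)| with hD
  have hD0 : 0 ≤ D := abs_nonneg _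
  have key : ∀ τ : Finset (Fin (κ + 1)), |mixS l x₁ H τ - mixS l x₂ H τ| ≤
      (if τ.card = 1 then D else 0) + β ^ 2 := by
    intro τ
    by_cases h1 : τ.card = 1
    · rw [if_pos h1]
      obtain ⟨i, rfl⟩ := Finset.card_eq_one.mp h1
      rw [mixS_single l x₁ H hsym, mixS_single l x₂ H hsym]
      have : D = |(∑ z : Fin κ → Z, ∑ y, (∏ j, l (z j)) * x₁ y * H (Fin.snoc z y : Fin (κ + 1) → Z)) -
        ∑ z : Fin κ → Z, ∑ y, (∏ j, l (z j)) * x₂ y * H (Fin.snoc z y : Fin (κ + 1) → Z)| := by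
        rw [hD]; simp only [mul_sub, sub_mul, Finset.sum_sub_distrib]
      rw [← this]
      nlinarith [sq_nonneg β]
    · rw [if_neg h1, zero_add]
      by_cases h0 : τ.card = 0
      · have : τ = ∅ := Finset.card_eq_zero.mp h0
        subst this
        simp only [mixS, Finset.notMem_empty, if_false, sub_self, abs_zero]
        positivity
      · have h2 : 2 ≤ τ.card := by omega
        have hp : β ^ τ.card ≤ β ^ 2 := pow_le_pow_of_le_one hβ hβ1 h2
        obtain ⟨a1, a2⟩ := mixS_bound l x₁ H τ β hl0 hx10 hl hx1 hH0 hH1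
        obtain ⟨b1, b2⟩ := mixS_bound l x₂ H τ β hl0 hx20 hl hx2 hH0 hH1
        rw [abs_le]; constructor <;> linarith
  refine (Finset.abs_sum_le_sum_abs _ _).trans ((Finset.sum_le_sum fun τ _ => key τ).trans ?_)
  rw [Finset.sum_add_distrib, ← Finset.sum_filter]
  have hc : (Finset.univ.filter fun τ : Finset (Fin (κ + 1)) => τ.card = 1).card = κ + 1 := by
    have : (Finset.univ.filter fun τ : Finset (Fin (κ + 1)) => τ.card = 1) = Finset.powersetCard 1 Finset.univ := by
      ext τ; simp [Finset.mem_powersetCard]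
    rw [this, Finset.card_powersetCard]; simp
  simp only [Finset.sum_const, hc, nsmul_eq_mul, Finset.card_univ, Fintype.card_finset, Fintype.card_fin]
  push_cast
  exact le_rfl
/-- Base tuple. -/
def tup0 {κ s : ℕ} (y : Fin s) : Fin (κ + 2) → Fin (κ + 1) ⊕ Fin s :=
  Fin.cons (Sum.inr y) (fun j => Sum.inl j)

/-- Row embedding. -/
def rowmap {κ M s : ℕ} (a : Fin (κ + 1) → Fin M) : Fin (κ + 1) ⊕ Fin s → (Fin (κ + 1) × Fin M) ⊕ Fin s :=
  Sum.map (fun j => (j, a j)) id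

open Classical in
/-- The partite distinguisher. -/
noncomputable def gF {V : Type*} {κ M s : ℕ} (φ : (Fin (κ + 1) × Fin M) ⊕ Fin s → V)
    (F : (Fin (κ + 1) → Fin M) → Fin s → Bool) : (Fin (κ + 2) → V) → Bool :=
  fun w => decide (∃ a y, F a y = true ∧ ∃ σ : Equiv.Perm (Fin (κ + 2)),
    w ∘ σ = φ ∘ rowmap a ∘ tup0 y)

lemma gF_symm {V : Type*} {κ M s : ℕ} (φ : (Fin (κ + 1) × Fin M) ⊕ Fin s → V)
    (F : (Fin (κ + 1) → Fin M) → Fin s → Bool) : IsSymmetric (gF φ F) := by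
  intro σ w
  unfold gF
  congr 1
  apply propext
  constructor
  · rintro ⟨a, y, h, τ, e⟩
    exact ⟨a, y, h, τ.trans σ, by rw [← e]; rfl⟩
  · rintro ⟨a, y, h, τ, e⟩
    refine ⟨a, y, h, τ.trans σ.symm, ?_⟩
    rw [← e]; funext i; simp

lemma rowmap_inj {κ M s : ℕ} (a : Fin (κ + 1) → Fin M) :
    Function.Injective (rowmap (s := s) a) := by
  apply Function.Injective.sumMap
  · intro i j h; exact (Prod.mk.inj h).1
  · exact Function.injective_id

lemma tup0_inj {κ s : ℕ} (y : Fin s) : Function.Injective (tup0 (κ := κ) y) := by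
  intro i j
  refine Fin.cases ?_ (fun i => ?_) i <;> refine Fin.cases ?_ (fun j => ?_) j <;> simp [tup0]

lemma tup0_comp_inj {κ s : ℕ} {y y' : Fin s} {σ σ' : Equiv.Perm (Fin (κ + 2))}
    (h : tup0 (κ := κ) y ∘ σ = tup0 y' ∘ σ') : y = y' ∧ σ = σ' := by
  have h0 := congrFun h (σ.symm 0)
  simp only [Function.comp, Equiv.apply_symm_apply] at h0
  have hy : y = y' := by
    revert h0
    generalize σ' (σ.symm 0) = j
    refine Fin.cases ?_ (fun j => ?_) j <;> simp [tup0]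
  subst hy
  refine ⟨rfl, Equiv.ext fun i => tup0_inj y (congrFun h i)⟩

lemma gF_row {V : Type*} {κ M s : ℕ} (φ : (Fin (κ + 1) × Fin M) ⊕ Fin s → V)
    (hφ : Function.Injective φ)
    (F : (Fin (κ + 1) → Fin M) → Fin s → Bool) (a : Fin (κ + 1) → Fin M)
    (z : Fin (κ + 2) → Fin (κ + 1) ⊕ Fin s) :
    gF φ F ((φ ∘ rowmap a) ∘ z) = true ↔
      ∃ y, F a y = true ∧ ∃ σ : Equiv.Perm (Fin (κ + 2)), z ∘ σ = tup0 y := by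
  classical
  unfold gF
  simp only [decide_eq_true_eq]
  constructor
  · rintro ⟨a', y, h, σ, e⟩
    have e1 : ∀ i, rowmap a (z (σ i)) = rowmap a' (tup0 y i) := fun i => hφ (congrFun e i)
    have ha : a' = a := by
      funext j
      have := e1 j.succ
      revert this
      generalize z (σ j.succ) = q
      rcases q with q | q
      · simp [rowmap, tup0]
        rintro rfl h; exact h.symm
      · simp [rowmap, tup0]
    subst ha
    exact ⟨y, h, σ, funext fun i => rowmap_inj a' (e1 i)⟩
  · rintro ⟨y, h, σ, e⟩
    exact ⟨a, y, h, σ, by rw [← e]; rfl⟩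

lemma gF_row_tup {V : Type*} {κ M s : ℕ} (φ : (Fin (κ + 1) × Fin M) ⊕ Fin s → V)
    (hφ : Function.Injective φ)
    (F : (Fin (κ + 1) → Fin M) → Fin s → Bool) (a : Fin (κ + 1) → Fin M) (y : Fin s)
    (σ : Equiv.Perm (Fin (κ + 2))) :
    gF φ F ((φ ∘ rowmap a) ∘ (tup0 y ∘ σ)) = F a y := by
  rw [Bool.eq_iff_iff, gF_row φ hφ]
  constructor
  · rintro ⟨y', h, σ', e⟩
    have : tup0 (κ := κ) y ∘ (σ'.trans σ) = tup0 y' ∘ (Equiv.refl _) := by rw [Equiv.coe_refl, Function.comp_id, ← e]; rfl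
    rw [(tup0_comp_inj this).1]; exact h
  · intro h
    exact ⟨y, h, σ.symm, by funext i; simp⟩

lemma sum_gF {V : Type*} {κ M s : ℕ} (φ : (Fin (κ + 1) × Fin M) ⊕ Fin s → V)
    (hφ : Function.Injective φ)
    (F : (Fin (κ + 1) → Fin M) → Fin s → Bool) (a : Fin (κ + 1) → Fin M) (b : ℝ) (x : Fin s → ℝ) :
    ∑ z : Fin (κ + 2) → Fin (κ + 1) ⊕ Fin s,
      (∏ i, (Sum.elim (fun _ => b) x (z i) : ℝ)) * (if gF φ F ((φ ∘ rowmap a) ∘ z) then 1 else 0) =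
    ((κ + 2).factorial : ℝ) * b ^ (κ + 1) * ∑ y, x y * (if F a y then 1 else 0) := by
  classical
  have h1 : ∑ q : Fin s × Equiv.Perm (Fin (κ + 2)), b ^ (κ + 1) * (x q.1 * (if F a q.1 then 1 else 0))
    = ∑ z : Fin (κ + 2) → Fin (κ + 1) ⊕ Fin s,
      (∏ i, (Sum.elim (fun _ => b) x (z i) : ℝ)) * (if gF φ F ((φ ∘ rowmap a) ∘ z) then 1 else 0) := by
    refine Finset.sum_of_injOn (fun q => tup0 q.1 ∘ q.2) ?_ ?_ ?_ ?_
    · rintro ⟨y, σ⟩ _ ⟨y', σ'⟩ _ h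
      obtain ⟨rfl, rfl⟩ := tup0_comp_inj h
      rfl
    · intro _ _; simp
    · intro z _ hz
      rw [if_neg, mul_zero]
      intro hg
      obtain ⟨y, _, σ, e⟩ := (gF_row φ hφ F a z).mp hg
      apply hz
      refine ⟨(y, σ.symm), by simp, ?_⟩
      dsimp only
      rw [← e]; funext i; simp
    · rintro ⟨y, σ⟩ _
      dsimp only
      rw [gF_row_tup φ hφ]
      have : ∏ i, (Sum.elim (fun _ => b) x ((tup0 (κ := κ) y ∘ σ) i) : ℝ) = b ^ (κ + 1) * x y := by
        refine (Equiv.prod_comp σ (fun i => (Sum.elim (fun _ => b) x (tup0 (κ := κ) y i) : ℝ))).trans ?_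
        rw [Fin.prod_univ_succ]
        simp [tup0, mul_comm]
      rw [this, mul_assoc]
  rw [← h1, Fintype.sum_prod_type, Finset.mul_sum]
  refine Finset.sum_congr rfl fun y _ => ?_
  refine (Finset.sum_const (b ^ (κ + 1) * (x y * (if F a y then 1 else 0)))).trans ?_
  rw [Finset.card_univ, Fintype.card_perm, Fintype.card_fin, nsmul_eq_mul]
  ring

lemma sum_restrict {κ n s : ℕ} (b : ℝ) (A : (Fin κ → Fin n ⊕ Fin s) → ℝ) :
    ∑ z : Fin κ → Fin n ⊕ Fin s, (∏ j, (Sum.elim (fun _ => b) (fun _ => 0) (z j) : ℝ)) * A z =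
    b ^ κ * ∑ t : Fin κ → Fin n, A (fun j => Sum.inl (t j)) := by
  classical
  rw [Finset.mul_sum]
  symm
  refine Finset.sum_of_injOn (fun t j => Sum.inl (t j)) ?_ ?_ ?_ ?_
  · intro t _ t' _ h
    funext j
    exact Sum.inl.inj (congrFun h j)
  · intro _ _; simp
  · intro z _ hz
    have : ∃ j y, z j = Sum.inr y := by
      by_contra hcon
      push Not at hcon
      have : ∀ j, ∃ i, z j = Sum.inl i := by
        intro j
        rcases hq : z j with q | q
        · exact ⟨q, rfl⟩
        · exact absurd hq (hcon j q)
      choose t ht using this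
      exact hz ⟨t, by simp, funext fun j => (ht j).symm⟩
    obtain ⟨j, y, hj⟩ := this
    rw [Finset.prod_eq_zero (Finset.mem_univ j) (by rw [hj]; rfl), zero_mul]
  · intro t _
    simp

lemma exists_of_IPM {V : Type*} {k : ℕ} (G : Set ((Fin k → V) → Bool)) (p₁ p₂ : V → ℝ) (c : ℝ) (hc : 0 ≤ c)
    (h : c < IPM G p₁ p₂) : ∃ g ∈ G, c < |LP p₁ g - LP p₂ g| := by
  unfold IPM at h
  by_contra hcon
  push Not at hcon
  have : (⨆ g ∈ G, |LP p₁ g - LP p₂ g|) ≤ c :=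
    Real.iSup_le (fun g => Real.iSup_le (fun hg => hcon g hg) hc) hc
  linarith

lemma weak {V : Type*} [Fintype V] {κ M s : ℕ} (φ : (Fin (κ + 1) × Fin M) ⊕ Fin s → V)
    (hφ : Function.Injective φ)
    (F : (Fin (κ + 1) → Fin M) → Fin s → Bool) (G : Set ((Fin (κ + 1) → V) → Bool))
    (hG : IsDistinguishingClass G) (ε : ℝ) (hε : 0 < ε)
    (hI : ∀ p₁ p₂ : V → ℝ, IsDist p₁ → IsDist p₂ →
      IPM G p₁ p₂ ≥ ε * |LP p₁ (gF φ F) - LP p₂ (gF φ F)|)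
    (a : Fin (κ + 1) → Fin M) (ξ₁ ξ₂ : Fin s → ℝ) (h10 : ∀ y, 0 ≤ ξ₁ y) (h20 : ∀ y, 0 ≤ ξ₂ y)
    (h1 : ∑ y, ξ₁ y = 1) (h2 : ∑ y, ξ₂ y = 1) (h1F : ∀ y, F a y = false → ξ₁ y = 0)
    (h2F : ∀ y, F a y = true → ξ₂ y = 0) :
    ∃ h ∈ G, ε * ((1 / (2 * (κ + 1))) ^ (κ + 1) / (4 * (κ + 1))) ≤
      |∑ t : Fin κ → Fin (κ + 1), ∑ y, (ξ₁ y - ξ₂ y) *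
        (if h (Fin.snoc (fun i => φ (Sum.inl (t i, a (t i)))) (φ (Sum.inr y)) : Fin (κ + 1) → V) then 1 else 0)| := by
  classical
  have hκ : (0 : ℝ) < κ + 1 := by positivity
  set c0 : ℝ := (1 / (2 * (κ + 1))) ^ (κ + 1) with hc0
  have c0p : 0 < c0 := by positivity
  set β : ℝ := min (1 / 2) (ε * c0 / (4 * 2 ^ (κ + 1))) with hβ
  have βp : 0 < β := lt_min (by norm_num) (by positivity)
  have βh : β ≤ 1 / 2 := min_le_left _ _
  have βe : 2 ^ (κ + 1) * β ≤ ε * c0 / 4 := by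
    have : β ≤ ε * c0 / (4 * 2 ^ (κ + 1)) := min_le_right _ _
    calc 2 ^ (κ + 1) * β ≤ 2 ^ (κ + 1) * (ε * c0 / (4 * 2 ^ (κ + 1))) := by gcongr
      _ = _ := by field_simp
  set b : ℝ := (1 - β) / (κ + 1) with hb
  have b0 : 0 ≤ b := div_nonneg (by linarith) hκ.le
  have blow : 1 / (2 * (κ + 1)) ≤ b := by
    rw [hb, div_le_div_iff₀ (by positivity) hκ]; nlinarith
  have bsum : (κ + 1) * b = 1 - β := by rw [hb]; field_simp
  have b1 : b ≤ 1 := by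
    have hk0 : (0 : ℝ) ≤ κ := Nat.cast_nonneg _
    nlinarith
  let om : (Fin s → ℝ) → Fin (κ + 1) ⊕ Fin s → ℝ := fun ξ => Sum.elim (fun _ => b) (fun y => β * ξ y)
  let pp : (Fin s → ℝ) → V → ℝ := fun ξ v => ∑ z, if (φ ∘ rowmap a) z = v then om ξ z else 0
  have hd : ∀ ξ : Fin s → ℝ, (∀ y, 0 ≤ ξ y) → ∑ y, ξ y = 1 → IsDist (pp ξ) := by
    intro ξ hξ hs
    refine isDist_push _ _ ?_ ?_
    · rintro (z | z)
      · exact b0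
      · exact mul_nonneg βp.le (hξ z)
    · simp only [om, Fintype.sum_sum_type, Sum.elim_inl, Sum.elim_inr, ← Finset.mul_sum, hs]
      simp only [Finset.sum_const, Finset.card_univ, Fintype.card_fin, nsmul_eq_mul]
      push_cast
      rw [bsum]; ring
  have hgP : ∀ ξ : Fin s → ℝ, LP (pp ξ) (gF φ F) =
      ((κ + 2).factorial : ℝ) * b ^ (κ + 1) * (β * ∑ y, ξ y * (if F a y then 1 else 0)) := by
    intro ξ
    rw [show LP (pp ξ) (gF φ F) = _ from LP_push (φ ∘ rowmap a) (om ξ) (gF φ F), sum_gF φ hφ F a]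
    simp only [Finset.mul_sum, mul_assoc]
  have f1 : ∑ y, ξ₁ y * (if F a y then (1 : ℝ) else 0) = 1 := by
    refine Eq.trans (Finset.sum_congr rfl fun y _ => ?_) h1
    cases hy : F a y
    · simp [h1F y hy]
    · simp
  have f2 : ∑ y, ξ₂ y * (if F a y then (1 : ℝ) else 0) = 0 := by
    refine Finset.sum_eq_zero fun y _ => ?_
    cases hy : F a y
    · simp
    · simp [h2F y hy]
  have hgap : c0 * β ≤ |LP (pp ξ₁) (gF φ F) - LP (pp ξ₂) (gF φ F)| := by
    rw [hgP, hgP, f1, f2]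
    refine le_trans ?_ (le_abs_self _)
    have hf : (1 : ℝ) ≤ ((κ + 2).factorial : ℝ) := by exact_mod_cast Nat.succ_le_of_lt (Nat.factorial_pos _)
    have hp : c0 ≤ b ^ (κ + 1) := by
      rw [hc0]; exact pow_le_pow_left₀ (by positivity) blow _
    have : c0 ≤ ((κ + 2).factorial : ℝ) * b ^ (κ + 1) := by nlinarith
    nlinarith
  have hlt : ε * (c0 * β) / 2 < IPM G (pp ξ₁) (pp ξ₂) := by
    have := hI _ _ (hd ξ₁ h10 h1) (hd ξ₂ h20 h2)
    have h3 : ε * (c0 * β) ≤ ε * |LP (pp ξ₁) (gF φ F) - LP (pp ξ₂) (gF φ F)| := by gcongr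
    have : 0 < ε * (c0 * β) := by positivity
    linarith
  obtain ⟨h, hh, hgt⟩ := exists_of_IPM G _ _ _ (by positivity) hlt
  refine ⟨h, hh, ?_⟩
  let l : Fin (κ + 1) ⊕ Fin s → ℝ := Sum.elim (fun _ => b) (fun _ => 0)
  let X : (Fin s → ℝ) → Fin (κ + 1) ⊕ Fin s → ℝ := fun ξ => Sum.elim (fun _ => 0) (fun y => β * ξ y)
  let H : (Fin (κ + 1) → Fin (κ + 1) ⊕ Fin s) → ℝ := fun z => if h ((φ ∘ rowmap a) ∘ z) then 1 else 0
  have hom : ∀ ξ z, om ξ z = X ξ z + l z := by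
    rintro ξ (z | z) <;> simp [om, X, l]
  have hP : ∀ ξ, LP (pp ξ) h = ∑ z : Fin (κ + 1) → Fin (κ + 1) ⊕ Fin s, (∏ i, (X ξ (z i) + l (z i))) * H z := by
    intro ξ
    rw [show LP (pp ξ) h = _ from LP_push (φ ∘ rowmap a) (om ξ) h]
    simp only [hom]
    rfl
  have hX0 : ∀ ξ : Fin s → ℝ, (∀ y, 0 ≤ ξ y) → ∀ z, 0 ≤ X ξ z := by
    rintro ξ hξ (z | z)
    · simp [X]
    · exact mul_nonneg βp.le (hξ z)
  have hXs : ∀ ξ : Fin s → ℝ, ∑ y, ξ y = 1 → ∑ z, X ξ z = β := by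
    intro ξ hs
    simp [X, ← Finset.mul_sum, hs]
  have hdb := diff_bound l (X ξ₁) (X ξ₂) H (fun σ z => by
      simp only [H]
      rw [← Function.comp_assoc, hG h hh σ]) β βp.le (by linarith)
      (by rintro (z | z) <;> simp [l, b0]) (hX0 ξ₁ h10) (hX0 ξ₂ h20)
      (by simp [l]; linarith) (hXs _ h1) (hXs _ h2)
      (fun z => by simp only [H]; split_ifs <;> norm_num) (fun z => by simp only [H]; split_ifs <;> norm_num)
  rw [← hP, ← hP] at hdb
  set W := ∑ t : Fin κ → Fin (κ + 1), ∑ y, (ξ₁ y - ξ₂ y) *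
        (if h (Fin.snoc (fun i => φ (Sum.inl (t i, a (t i)))) (φ (Sum.inr y)) : Fin (κ + 1) → V) then (1 : ℝ) else 0) with hW
  have hsum : ∑ z : Fin κ → Fin (κ + 1) ⊕ Fin s, ∑ y, (∏ j, l (z j)) * (X ξ₁ y - X ξ₂ y) *
      H (Fin.snoc z y : Fin (κ + 1) → _) = b ^ κ * (β * W) := by
    have e1 : ∀ z : Fin κ → Fin (κ + 1) ⊕ Fin s, ∑ y, (∏ j, l (z j)) * (X ξ₁ y - X ξ₂ y) *
      H (Fin.snoc z y : Fin (κ + 1) → _) = (∏ j, l (z j)) * ∑ y, (X ξ₁ y - X ξ₂ y) *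
      H (Fin.snoc z y : Fin (κ + 1) → _) := by
      intro z; rw [Finset.mul_sum]; simp only [mul_assoc]
    simp_rw [e1]
    rw [sum_restrict b, hW, Finset.mul_sum _ _ β]
    congr 1
    refine Finset.sum_congr rfl fun t _ => ?_
    rw [Fintype.sum_sum_type]
    simp only [X, Sum.elim_inl, Sum.elim_inr, sub_self, zero_mul, Finset.sum_const_zero, zero_add]
    rw [Finset.mul_sum]
    refine Finset.sum_congr rfl fun y _ => ?_
    have e2 : (φ ∘ rowmap a) ∘ (Fin.snoc (fun j => Sum.inl (t j)) (Sum.inr y) : Fin (κ + 1) → Fin (κ + 1) ⊕ Fin s)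
        = (Fin.snoc (fun i => φ (Sum.inl (t i, a (t i)))) (φ (Sum.inr y)) : Fin (κ + 1) → V) := by
      rw [Fin.comp_snoc]; rfl
    simp only [H, e2]
    ring
  rw [hsum] at hdb
  have hb1 : b ^ κ ≤ 1 := pow_le_one₀ b0 b1
  have habs : |b ^ κ * (β * W)| ≤ β * |W| := by
    rw [abs_mul, abs_mul, abs_of_nonneg (pow_nonneg b0 κ), abs_of_pos βp]
    exact mul_le_of_le_one_left (by positivity) hb1
  have hfin : ε * (c0 * β) / 2 < (κ + 1) * (β * |W|) + 2 ^ (κ + 1) * β ^ 2 := by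
    have : (κ + 1 : ℝ) * |b ^ κ * (β * W)| ≤ (κ + 1) * (β * |W|) := by gcongr
    linarith
  have hfin2 : ε * c0 / 2 < (κ + 1) * |W| + 2 ^ (κ + 1) * β := by
    have : β * (ε * c0 / 2) < β * ((κ + 1) * |W| + 2 ^ (κ + 1) * β) := by nlinarith
    exact lt_of_mul_lt_mul_left this βp.le
  have hfin3 : ε * c0 / 4 ≤ (κ + 1) * |W| := by linarith
  rw [show ε * (c0 / (4 * (κ + 1))) = (ε * c0 / 4) / (κ + 1) by field_simp, div_le_iff₀ hκ]
  linarith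

/-- Decoder. -/
def dec {κ M s K m : ℕ} (T : (Fin κ → Fin (κ + 1) × Fin M) → Fin K → Fin s → Bool)
    (c : (Fin (κ + 1) → Fin M) → (Fin m → (Fin κ → Fin (κ + 1)) × Fin K × Bool) × Fin (m + 2)) :
    (Fin (κ + 1) → Fin M) → Fin s → Bool := fun a y =>
  decide (((c a).2 : ℕ) ≤ (Finset.univ.filter fun j : Fin m =>
    xor (T (fun i => (((c a).1 j).1 i, a (((c a).1 j).1 i))) ((c a).1 j).2.1 y) ((c a).1 j).2.2 = true).card)

lemma counting {κ M s r α R B : ℕ} (hM : 4 * (s + 1) ^ R * (κ + 1) ^ κ ≤ M) (hM1 : 1 ≤ M)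
    (hr : s + 1 ≤ 2 ^ r) (hα : 2 * (κ + 1) ^ κ ≤ 2 ^ α)
    (he : 2 * ((α + r + 1) * B + 1) ≤ s) (hRB : 4 * (R + B) < s) :
    ∃ F : (Fin (κ + 1) → Fin M) → Fin s → Bool, ∀ ρ m : ℕ, ρ ≤ R → m * (ρ + 1) ≤ B →
      ∀ T : (Fin κ → Fin (κ + 1) × Fin M) → Fin ((s + 1) ^ ρ) → Fin s → Bool,
      ∀ c : (Fin (κ + 1) → Fin M) → (Fin m → (Fin κ → Fin (κ + 1)) × Fin ((s + 1) ^ ρ) × Bool) × Fin (m + 2),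
        F ≠ dec T c := by
  classical
  by_contra hcon
  push Not at hcon
  let D : ℕ × ℕ → Type := fun p =>
    ((Fin κ → Fin (κ + 1) × Fin M) → Fin ((s + 1) ^ p.1) → Fin s → Bool) ×
    ((Fin (κ + 1) → Fin M) → (Fin p.2 → (Fin κ → Fin (κ + 1)) × Fin ((s + 1) ^ p.1) × Bool) × Fin (p.2 + 2))
  have : ∀ p, Fintype (D p) := fun p => by dsimp only [D]; infer_instance
  let P : Finset (ℕ × ℕ) := (Finset.range (R + 1) ×ˢ Finset.range (B + 1)).filter fun p => p.2 * (p.1 + 1) ≤ B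
  let im : ℕ × ℕ → Finset ((Fin (κ + 1) → Fin M) → Fin s → Bool) := fun p =>
    Finset.univ.image (fun d : D p => dec d.1 d.2)
  have hcov : (Finset.univ : Finset ((Fin (κ + 1) → Fin M) → Fin s → Bool)) ⊆ P.biUnion im := by
    intro F _
    obtain ⟨ρ, m, hρ, hm, T, c, e⟩ := hcon F
    have hmB : m ≤ B := le_trans (Nat.le_mul_of_pos_right m (Nat.succ_pos ρ)) hm
    refine Finset.mem_biUnion.mpr ⟨(ρ, m), ?_, ?_⟩
    · simp only [P, Finset.mem_filter, Finset.mem_product, Finset.mem_range]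
      exact ⟨⟨by omega, by omega⟩, hm⟩
    · exact Finset.mem_image.mpr ⟨(T, c), Finset.mem_univ _, e.symm⟩
  set Z := M ^ (κ + 1) with hZ
  have hZ1 : 1 ≤ Z := Nat.one_le_pow _ _ hM1
  have hcard : ∀ p ∈ P, (im p).card ≤ 2 ^ (3 * s * Z / 4) := by
    rintro ⟨ρ, m⟩ hp
    simp only [P, Finset.mem_filter, Finset.mem_product, Finset.mem_range] at hp
    obtain ⟨⟨hρ, hm⟩, hmB⟩ := hp
    refine Finset.card_image_le.trans ?_
    have hc : Fintype.card (D (ρ, m)) = (((2 ^ s) ^ ((s + 1) ^ ρ)) ^ (((κ + 1) * M) ^ κ)) *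
        ((((κ + 1) ^ κ * ((s + 1) ^ ρ * 2)) ^ m * (m + 2)) ^ Z) := by
      refine (Fintype.card_congr (show D (ρ, m) ≃ (((Fin κ → Fin (κ + 1) × Fin M) → Fin ((s + 1) ^ ρ) → Fin s → Bool) ×
        ((Fin (κ + 1) → Fin M) → (Fin m → (Fin κ → Fin (κ + 1)) × Fin ((s + 1) ^ ρ) × Bool) × Fin (m + 2))) from Equiv.refl _)).trans ?_
      simp [hZ]
    rw [Finset.card_univ, hc]
    set K := (s + 1) ^ ρ with hK
    have hKR : K ≤ (s + 1) ^ R := Nat.pow_le_pow_right (by omega) (by omega)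
    have hK2 : K ≤ 2 ^ (r * ρ) := by rw [pow_mul]; exact Nat.pow_le_pow_left hr ρ
    have hE1 : 4 * (s * K * ((κ + 1) * M) ^ κ) ≤ s * Z := by
      have : 4 * K * (κ + 1) ^ κ ≤ M := le_trans (by gcongr) hM
      calc 4 * (s * K * ((κ + 1) * M) ^ κ) = s * M ^ κ * (4 * K * (κ + 1) ^ κ) := by rw [mul_pow]; ring
        _ ≤ s * M ^ κ * M := by gcongr
        _ = s * Z := by rw [hZ]; ring
    set e := (α + r + 1) * B + 1 with hedef
    have hbase : ((κ + 1) ^ κ * (K * 2)) ^ m * (m + 2) ≤ 2 ^ e := by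
      have h1 : (κ + 1) ^ κ * (K * 2) ≤ 2 ^ (α + r * ρ) := by
        calc (κ + 1) ^ κ * (K * 2) = (2 * (κ + 1) ^ κ) * K := by ring
          _ ≤ 2 ^ α * 2 ^ (r * ρ) := Nat.mul_le_mul hα hK2
          _ = _ := by rw [pow_add]
      have h2 : m + 2 ≤ 2 ^ (m + 1) := Nat.lt_two_pow_self (n := m + 1)
      calc ((κ + 1) ^ κ * (K * 2)) ^ m * (m + 2) ≤ (2 ^ (α + r * ρ)) ^ m * 2 ^ (m + 1) :=
            Nat.mul_le_mul (Nat.pow_le_pow_left h1 m) h2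
        _ = 2 ^ ((α + r * ρ) * m + (m + 1)) := by rw [← pow_mul, ← pow_add]
        _ ≤ 2 ^ e := by
            apply Nat.pow_le_pow_right (by norm_num)
            have : (α + r + 1) * (m * (ρ + 1)) ≤ (α + r + 1) * B := Nat.mul_le_mul_left _ hmB
            have h3 : (α + r * ρ) * m + m ≤ (α + r + 1) * (m * (ρ + 1)) := by nlinarith [Nat.zero_le (α * m * ρ), Nat.zero_le (r*m), Nat.zero_le (m*ρ)]
            omega
    calc _ ≤ 2 ^ (s * K * ((κ + 1) * M) ^ κ) * (2 ^ e) ^ Z :=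
          Nat.mul_le_mul (le_of_eq (by rw [pow_mul, pow_mul])) (Nat.pow_le_pow_left hbase Z)
      _ = 2 ^ (s * K * ((κ + 1) * M) ^ κ + e * Z) := by rw [← pow_mul, ← pow_add]
      _ ≤ _ := by
          apply Nat.pow_le_pow_right (by norm_num)
          rw [Nat.le_div_iff_mul_le (by norm_num)]
          have : 2 * e * Z ≤ s * Z := Nat.mul_le_mul_right _ he
          nlinarith
  have h1 : 2 ^ (s * Z) ≤ P.card * 2 ^ (3 * s * Z / 4) := by
    calc 2 ^ (s * Z) = (Finset.univ : Finset ((Fin (κ + 1) → Fin M) → Fin s → Bool)).card := by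
          rw [Finset.card_univ]; simp [hZ, pow_mul]
      _ ≤ (P.biUnion im).card := Finset.card_le_card hcov
      _ ≤ P.card * _ := Finset.card_biUnion_le_card_mul _ _ _ hcard
  have h2 : P.card ≤ 2 ^ (R + B) := by
    calc P.card ≤ (R + 1) * (B + 1) := by
          refine (Finset.card_filter_le _ _).trans ?_
          simp
      _ ≤ 2 ^ R * 2 ^ B := Nat.mul_le_mul (Nat.lt_two_pow_self (n := R)) (Nat.lt_two_pow_self (n := B))
      _ = _ := by rw [pow_add]
  have h3 : 2 ^ (s * Z) ≤ 2 ^ (R + B + 3 * s * Z / 4) := by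
    rw [pow_add]; exact h1.trans (Nat.mul_le_mul_right _ h2)
  have h4 := (Nat.pow_le_pow_iff_right (by norm_num : 1 < 2)).mp h3
  have h5 : s * 1 ≤ s * Z := Nat.mul_le_mul_left _ hZ1
  have h6 : 3 * s * Z = 3 * (s * Z) := by ring
  rw [h6] at h4
  omega

/-- Weak-learning hypothesis in terms of patterns. -/
def WK {κ M s K : ℕ} (F : (Fin (κ + 1) → Fin M) → Fin s → Bool)
    (T : (Fin κ → Fin (κ + 1) × Fin M) → Fin K → Fin s → Bool) (η : ℝ) : Prop :=
  ∀ (a : Fin (κ + 1) → Fin M) (ξ₁ ξ₂ : Fin s → ℝ), (∀ y, 0 ≤ ξ₁ y) → (∀ y, 0 ≤ ξ₂ y) →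
    ∑ y, ξ₁ y = 1 → ∑ y, ξ₂ y = 1 → (∀ y, F a y = false → ξ₁ y = 0) →
    (∀ y, F a y = true → ξ₂ y = 0) →
    ∃ j : (Fin κ → Fin (κ + 1)) → Fin K, η ≤ |∑ t : Fin κ → Fin (κ + 1), ∑ y, (ξ₁ y - ξ₂ y) *
      (if T (fun i => (t i, a (t i))) (j t) y then 1 else 0)|

lemma decA {κ M s K m : ℕ} (F : (Fin (κ + 1) → Fin M) → Fin s → Bool)
    (T : (Fin κ → Fin (κ + 1) × Fin M) → Fin K → Fin s → Bool) (δ : ℝ) (hδ : 0 < δ) (hδ1 : δ ≤ 1)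
    (hK : 0 < K) (hW : WK F T (δ * (κ + 1) ^ κ))
    (hm : (s : ℝ) ^ 2 * Real.exp (-(m * (δ ^ 2 / 8))) < 1) :
    ∃ c : (Fin (κ + 1) → Fin M) → (Fin m → (Fin κ → Fin (κ + 1)) × Fin K × Bool) × Fin (m + 2),
      F = dec T c := by
  classical
  have : Nonempty (Fin K) := ⟨⟨0, hK⟩⟩
  have key : ∀ a, ∃ (c : Fin m → (Fin κ → Fin (κ + 1)) × Fin K × Bool) (θ : Fin (m + 2)), ∀ y, F a y =
      decide ((θ : ℕ) ≤ (Finset.univ.filter fun j =>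
        xor (T (fun i => ((c j).1 i, a ((c j).1 i))) (c j).2.1 y) (c j).2.2 = true).card) := by
    intro a
    refine boost (F a) (fun (q : (Fin κ → Fin (κ + 1)) × Fin K × Bool) y =>
      xor (T (fun i => (q.1 i, a (q.1 i))) q.2.1 y) q.2.2) δ hδ hδ1 ?_ m hm
    intro ξ₁ ξ₂ h10 h20 h1 h2 h1F h2F
    obtain ⟨j, hj⟩ := hW a ξ₁ ξ₂ h10 h20 h1 h2 h1F h2F
    set w : (Fin κ → Fin (κ + 1)) → ℝ := fun t => ∑ y, (ξ₁ y - ξ₂ y) *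
      (if T (fun i => (t i, a (t i))) (j t) y then 1 else 0) with hw
    have : ∃ t, δ ≤ |w t| := by
      by_contra hcon
      push Not at hcon
      have h3 : ∑ t : Fin κ → Fin (κ + 1), |w t| < ∑ t : Fin κ → Fin (κ + 1), δ :=
        Finset.sum_lt_sum_of_nonempty ⟨fun _ => 0, Finset.mem_univ _⟩ fun t _ => hcon t
      have h4 : |∑ t, w t| ≤ ∑ t, |w t| := Finset.abs_sum_le_sum_abs _ _
      have h5 : ∑ t : Fin κ → Fin (κ + 1), δ = δ * (κ + 1) ^ κ := by
        simp [mul_comm]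
      rw [h5] at h3
      linarith
    obtain ⟨t, ht⟩ := this
    rcases le_total 0 (w t) with h | h
    · refine ⟨(t, j t, false), ?_⟩
      rw [abs_of_nonneg h] at ht
      simpa [hw] using ht
    · refine ⟨(t, j t, true), ?_⟩
      rw [abs_of_nonpos h] at ht
      refine ht.trans (le_of_eq ?_)
      have h0 : ∑ y, (ξ₁ y - ξ₂ y) = 0 := by rw [Finset.sum_sub_distrib, h1, h2, sub_self]
      have h3 : -w t = ∑ y, (ξ₁ y - ξ₂ y) - w t := by rw [h0, zero_sub]
      rw [h3, hw, ← Finset.sum_sub_distrib]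
      refine Finset.sum_congr rfl fun y _ => ?_
      cases T (fun i => (t i, a (t i))) (j t) y <;> simp
  choose c θ h using key
  exact ⟨fun a => (c a, θ a), funext fun a => funext fun y => h a y⟩

lemma decB {κ M s K : ℕ} (F : (Fin (κ + 1) → Fin M) → Fin s → Bool)
    (T : (Fin κ → Fin (κ + 1) × Fin M) → Fin K → Fin s → Bool) (η : ℝ) (hη : 0 < η)
    (hK : K = 1) (hW : WK F T η) :
    ∃ c : (Fin (κ + 1) → Fin M) → (Fin ((κ + 1) ^ κ) → (Fin κ → Fin (κ + 1)) × Fin K × Bool) ×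
      Fin ((κ + 1) ^ κ + 2), F = dec T c := by
  classical
  subst hK
  let e : Fin ((κ + 1) ^ κ) ≃ (Fin κ → Fin (κ + 1)) := (Fintype.equivFinOfCardEq (by simp)).symm
  have key : ∀ a, ∃ (b : Bool) (θ : Fin ((κ + 1) ^ κ + 2)), ∀ y, F a y =
      decide ((θ : ℕ) ≤ (Finset.univ.filter fun j =>
        xor (T (fun i => (e j i, a (e j i))) 0 y) b = true).card) := by
    intro a
    set H : Fin s → ℕ := fun y => (Finset.univ.filter fun j => T (fun i => (e j i, a (e j i))) 0 y = true).card with hH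
    have hne : ∀ ξ₁ ξ₂ : Fin s → ℝ, (∀ y, 0 ≤ ξ₁ y) → (∀ y, 0 ≤ ξ₂ y) →
      ∑ y, ξ₁ y = 1 → ∑ y, ξ₂ y = 1 → (∀ y, F a y = false → ξ₁ y = 0) →
      (∀ y, F a y = true → ξ₂ y = 0) → ∑ y, (ξ₁ y - ξ₂ y) * (H y : ℝ) ≠ 0 := by
      intro ξ₁ ξ₂ h10 h20 h1 h2 h1F h2F h0
      obtain ⟨j, hj⟩ := hW a ξ₁ ξ₂ h10 h20 h1 h2 h1F h2F
      have hj0 : ∀ t, j t = 0 := fun t => Subsingleton.elim _ _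
      have : ∑ t : Fin κ → Fin (κ + 1), ∑ y, (ξ₁ y - ξ₂ y) *
        (if T (fun i => (t i, a (t i))) (j t) y then (1 : ℝ) else 0) = ∑ y, (ξ₁ y - ξ₂ y) * (H y : ℝ) := by
        rw [← Equiv.sum_comp e, Finset.sum_comm]
        refine Finset.sum_congr rfl fun y _ => ?_
        rw [← Finset.mul_sum, hH]
        simp only [hj0, Finset.sum_boole]
      rw [this, h0, abs_zero] at hj
      linarith
    have hdich : (∀ x z, F a x = true → F a z = false → H z < H x) ∨
        (∀ x z, F a x = true → F a z = false → H x < H z) := by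
      by_contra hcon
      push Not at hcon
      obtain ⟨⟨x, z, hx, hz, hl⟩, ⟨x', z', hx', hz', hl'⟩⟩ := hcon
      have hl : (H x : ℝ) ≤ H z := by exact_mod_cast hl
      have hl' : (H z' : ℝ) ≤ H x' := by exact_mod_cast hl'
      obtain ⟨q, q', hq, hq', hqq, hzero⟩ : ∃ q q' : ℝ, 0 ≤ q ∧ 0 ≤ q' ∧ q + q' = 1 ∧
          q * ((H x : ℝ) - H z) + q' * (H x' - H z') = 0 := by
        rcases eq_or_lt_of_le hl with h | h
        · exact ⟨1, 0, by norm_num, le_rfl, by norm_num, by rw [h]; ring⟩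
        · have hp : 0 < ((H z : ℝ) - H x) + (H x' - H z') := by linarith
          refine ⟨(H x' - H z') / (((H z : ℝ) - H x) + (H x' - H z')),
            (H z - H x) / (((H z : ℝ) - H x) + (H x' - H z')), div_nonneg (by linarith) hp.le,
            div_nonneg (by linarith) hp.le, ?_, ?_⟩
          · field_simp; ring
          · field_simp; ring
      refine hne (fun y => q * (if y = x then 1 else 0) + q' * (if y = x' then 1 else 0))
        (fun y => q * (if y = z then 1 else 0) + q' * (if y = z' then 1 else 0))
        (fun y => by positivity) (fun y => by positivity) ?_ ?_ ?_ ?_ ?_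
      · simp [Finset.sum_add_distrib, hqq]
      · simp [Finset.sum_add_distrib, hqq]
      · intro y hy
        have h1 : y ≠ x := by rintro rfl; simp [hx] at hy
        have h2 : y ≠ x' := by rintro rfl; simp [hx'] at hy
        simp [h1, h2]
      · intro y hy
        have h1 : y ≠ z := by rintro rfl; simp [hz] at hy
        have h2 : y ≠ z' := by rintro rfl; simp [hz'] at hy
        simp [h1, h2]
      · refine Eq.trans ?_ hzero
        have hp : ∀ w : Fin s, ∑ y, (if y = w then (1 : ℝ) else 0) * (H y : ℝ) = H w := by
          intro w; simp
        rw [← hp x, ← hp z, ← hp x', ← hp z']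
        simp only [Finset.mul_sum, ← Finset.sum_add_distrib, ← Finset.sum_sub_distrib]
        refine Finset.sum_congr rfl fun y _ => ?_
        ring
    rcases hdich with h | h
    · obtain ⟨θ, hθ⟩ := threshold_of_sep (m := (κ + 1) ^ κ) (F a) H
        (fun y => (Finset.card_le_univ _).trans (by simp)) h
      refine ⟨false, θ, fun y => ?_⟩
      rw [hθ y]
      simp [hH]
    · have hcomp : ∀ y, H y + (Finset.univ.filter fun j =>
          xor (T (fun i => (e j i, a (e j i))) 0 y) true = true).card = (κ + 1) ^ κ := by
        intro y
        have := Finset.card_filter_add_card_filter_not (s := (Finset.univ : Finset (Fin ((κ + 1) ^ κ))))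
          (fun j => T (fun i => (e j i, a (e j i))) 0 y = true)
        simpa [hH] using this
      obtain ⟨θ, hθ⟩ := threshold_of_sep (m := (κ + 1) ^ κ) (F a) (fun y => (Finset.univ.filter fun j =>
          xor (T (fun i => (e j i, a (e j i))) 0 y) true = true).card)
        (fun y => by have := hcomp y; omega) (fun x z hx hz => by
          have := h x z hx hz
          have := hcomp x
          have := hcomp z
          omega)
      exact ⟨true, θ, hθ⟩
  choose b θ h using key
  exact ⟨fun a => (fun j => (e j, 0, b a), θ a), funext fun a => funext fun y => h a y⟩

lemma decC {κ M s K K' : ℕ} (F : (Fin (κ + 1) → Fin M) → Fin s → Bool)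
    (T : (Fin κ → Fin (κ + 1) × Fin M) → Fin K → Fin s → Bool)
    (T' : (Fin κ → Fin (κ + 1) × Fin M) → Fin K' → Fin s → Bool) (δ : ℝ)
    (hW : WK F T (δ * (κ + 1) ^ κ)) :
    δ ≤ 1 ∨ ∃ c : (Fin (κ + 1) → Fin M) → (Fin 0 → (Fin κ → Fin (κ + 1)) × Fin K' × Bool) × Fin (0 + 2),
      F = dec T' c := by
  classical
  by_cases hn : ∃ a x z, F a x = true ∧ F a z = false
  · left
    obtain ⟨a, x, z, hx, hz⟩ := hn
    obtain ⟨j, hj⟩ := hW a (fun y => if y = x then 1 else 0) (fun y => if y = z then 1 else 0)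
      (fun y => by positivity) (fun y => by positivity) (by simp) (by simp)
      (fun y hy => by rw [if_neg]; rintro rfl; simp [hx] at hy)
      (fun y hy => by rw [if_neg]; rintro rfl; simp [hz] at hy)
    have h1 : ∀ t : Fin κ → Fin (κ + 1), |∑ y, ((if y = x then (1 : ℝ) else 0) - (if y = z then 1 else 0)) *
        (if T (fun i => (t i, a (t i))) (j t) y then 1 else 0)| ≤ 1 := by
      intro t
      simp only [sub_mul, Finset.sum_sub_distrib, ite_mul, one_mul, zero_mul, Finset.sum_ite_eq',
        Finset.mem_univ, if_true]
      split_ifs <;> norm_num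
    have h2 := hj.trans ((Finset.abs_sum_le_sum_abs _ _).trans (Finset.sum_le_sum fun t _ => h1 t))
    have h3 : ∑ t : Fin κ → Fin (κ + 1), (1 : ℝ) = 1 * (κ + 1) ^ κ := by simp
    rw [h3] at h2
    exact le_of_mul_le_mul_right h2 (by positivity)
  · right
    push Not at hn
    refine ⟨fun a => (Fin.elim0, if ∃ y, F a y = true then 0 else 1), ?_⟩
    funext a y
    unfold dec
    by_cases h : ∃ y, F a y = true
    · obtain ⟨x, hx⟩ := h
      have := hn a x y hx
      have h' : ∃ y, F a y = true := ⟨x, hx⟩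
      simp [h']
      simpa using this
    · have h2 : F a y = false := by
        by_contra h3
        exact h ⟨y, by simpa using h3⟩
      simp only [h, if_false]
      simp [h2]

lemma getWK {V : Type*} [Fintype V] {κ M s ρ : ℕ} (φ : (Fin (κ + 1) × Fin M) ⊕ Fin s → V)
    (hφ : Function.Injective φ)
    (F : (Fin (κ + 1) → Fin M) → Fin s → Bool) (G : Set ((Fin (κ + 1) → V) → Bool))
    (hG : IsDistinguishingClass G) (ε : ℝ) (hε : 0 < ε)
    (hI : ∀ p₁ p₂ : V → ℝ, IsDist p₁ → IsDist p₂ →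
      IPM G p₁ p₂ ≥ ε * |LP p₁ (gF φ F) - LP p₂ (gF φ F)|)
    (hρ : gvcDim (κ + 1) G ≤ (ρ : ℕ∞)) :
    ∃ T : (Fin κ → Fin (κ + 1) × Fin M) → Fin ((s + 1) ^ ρ) → Fin s → Bool,
      WK F T (ε * ((1 / (2 * (κ + 1))) ^ (κ + 1) / (4 * (κ + 1)))) := by
  have := fun u : Fin κ → Fin (κ + 1) × Fin M => patterns G hρ (fun y => φ (Sum.inr y))
    (fun y y' h => Sum.inr.inj (hφ h)) (fun i => φ (Sum.inl (u i)))
  choose T hT using this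
  refine ⟨T, ?_⟩
  intro a ξ₁ ξ₂ h10 h20 h1 h2 h1F h2F
  obtain ⟨h, hh, hle⟩ := weak φ hφ F G hG ε hε hI a ξ₁ ξ₂ h10 h20 h1 h2 h1F h2F
  choose j hj using fun t : Fin κ → Fin (κ + 1) => hT (fun i => (t i, a (t i))) h hh
  refine ⟨j, ?_⟩
  simp only [hj]
  exact hle

lemma params (Γ C α E : ℕ) : ∃ r0 : ℕ, 1 ≤ r0 ∧ ∀ r, r0 ≤ r →
    (r ^ 4 + 1) ^ (4 * Γ) ≤ 2 ^ r ∧ 2 * ((α + r + 1) * (C * r ^ 2) + 1) ≤ r ^ 4 ∧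
    4 * (2 * Γ * r + C * r ^ 2) < r ^ 4 ∧ E ≤ r := by
  have ht := tendsto_pow_const_div_const_pow_of_one_lt (20 * Γ) (one_lt_two : (1 : ℝ) < 2)
  have h1 : ∀ᶠ r : ℕ in Filter.atTop, (r : ℝ) ^ (20 * Γ) / 2 ^ r < 1 :=
    ht.eventually (gt_mem_nhds one_pos)
  obtain ⟨r1, hr1⟩ := Filter.eventually_atTop.mp h1
  refine ⟨r1 + (4 * C + 2) + (α + 1) + (8 * Γ + 4 * C + 1) + E + 2, by omega, fun r hr => ⟨?_, ?_, ?_, by omega⟩⟩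
  · have h2 := hr1 r (by omega)
    rw [div_lt_one (by positivity)] at h2
    have h3 : r ^ (20 * Γ) ≤ 2 ^ r := by exact_mod_cast h2.le
    refine le_trans ?_ h3
    rw [show 20 * Γ = 5 * (4 * Γ) by ring, pow_mul r]
    apply Nat.pow_le_pow_left
    have : 1 ≤ r ^ 4 := Nat.one_le_pow _ _ (by omega)
    have h2r : 2 ≤ r := by omega
    calc r ^ 4 + 1 ≤ r ^ 4 * 2 := by omega
      _ ≤ r ^ 4 * r := Nat.mul_le_mul_left _ h2r
      _ = r ^ 5 := by ring
  · have h2 : α + r + 1 ≤ 2 * r := by omega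
    have h3 : 4 * C + 2 ≤ r := by omega
    have h4 : 1 ≤ r ^ 3 := Nat.one_le_pow _ _ (by omega)
    calc 2 * ((α + r + 1) * (C * r ^ 2) + 1) ≤ 2 * (2 * r * (C * r ^ 2) + 1) := by gcongr
      _ = 4 * C * r ^ 3 + 2 := by ring
      _ ≤ (4 * C + 2) * r ^ 3 := by nlinarith
      _ ≤ r * r ^ 3 := by gcongr
      _ = r ^ 4 := by ring
  · have h3 : 8 * Γ + 4 * C < r := by omega
    have h4 : 1 ≤ r := by omega
    have h5 : 0 < r ^ 2 := by positivity
    calc 4 * (2 * Γ * r + C * r ^ 2) ≤ 4 * (2 * Γ * (r * r) + C * r ^ 2) := by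
          gcongr; exact Nat.le_mul_of_pos_right r h4
      _ = (8 * Γ + 4 * C) * r ^ 2 := by ring
      _ < r * r ^ 2 := by gcongr
      _ ≤ r * r ^ 2 * r := Nat.le_mul_of_pos_right _ h4
      _ = r ^ 4 := by ring

lemma boost_m (s r : ℕ) (hr : 1 ≤ r) (hs : s + 1 ≤ 2 ^ r) (δ : ℝ) (hδ : 0 < δ) (hδ1 : δ ≤ 1) :
    ∃ m : ℕ, (s : ℝ) ^ 2 * Real.exp (-(m * (δ ^ 2 / 8))) < 1 ∧ (m : ℝ) * δ ^ 2 ≤ 18 * r := by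
  have hr' : (1 : ℝ) ≤ r := by exact_mod_cast hr
  have hd2 : 0 < δ ^ 2 := by positivity
  have hd21 : δ ^ 2 ≤ 1 := pow_le_one₀ hδ.le hδ1
  refine ⟨⌈16 * r / δ ^ 2⌉₊ + 1, ?_, ?_⟩
  · have h1 : 16 * r / δ ^ 2 ≤ ⌈16 * r / δ ^ 2⌉₊ := Nat.le_ceil _
    rw [div_le_iff₀ hd2] at h1
    have hs' : (s : ℝ) ≤ Real.exp r := by
      have h2 : (s : ℝ) ≤ 2 ^ r := by exact_mod_cast (by omega : s ≤ 2 ^ r)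
      refine h2.trans ?_
      rw [← Real.exp_one_rpow, Real.rpow_natCast]
      have := Real.exp_one_gt_d9
      gcongr
      linarith
    have h3 : (s : ℝ) ^ 2 ≤ Real.exp (2 * r) := by
      rw [show (2 : ℝ) * r = r + r by ring, Real.exp_add, sq]
      exact mul_self_le_mul_self (Nat.cast_nonneg _) hs'
    calc (s : ℝ) ^ 2 * Real.exp (-(((⌈16 * r / δ ^ 2⌉₊ + 1 : ℕ) : ℝ) * (δ ^ 2 / 8)))
        ≤ Real.exp (2 * r) * Real.exp (-(((⌈16 * r / δ ^ 2⌉₊ + 1 : ℕ) : ℝ) * (δ ^ 2 / 8))) := by gcongr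
      _ = Real.exp (2 * r + -(((⌈16 * r / δ ^ 2⌉₊ + 1 : ℕ) : ℝ) * (δ ^ 2 / 8))) := by rw [Real.exp_add]
      _ < 1 := by
        rw [Real.exp_lt_one_iff]
        push_cast
        nlinarith
  · have h1 : (⌈16 * r / δ ^ 2⌉₊ : ℝ) < 16 * r / δ ^ 2 + 1 := Nat.ceil_lt_add_one (by positivity)
    push_cast
    have h2 : ((⌈16 * r / δ ^ 2⌉₊ : ℝ) + 1) * δ ^ 2 ≤ (16 * r / δ ^ 2 + 2) * δ ^ 2 := by
      exact mul_le_mul_of_nonneg_right (by linarith) hd2.le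
    have h3 : (16 * r / δ ^ 2 + 2) * δ ^ 2 = 16 * r + 2 * δ ^ 2 := by field_simp
    linarith

lemma core (κ : ℕ) : ∃ N : ℕ, ∀ n : ℕ, N ≤ n →
    ∀ (V : Type) [Fintype V], Fintype.card V = n →
      ∃ g : (Fin (κ + 2) → V) → Bool, IsSymmetric g ∧
        ∀ ε : ℝ, 0 < ε →
          ∀ G : Set ((Fin (κ + 1) → V) → Bool), IsDistinguishingClass G →
            (∀ p₁ p₂ : V → ℝ, IsDist p₁ → IsDist p₂ →
              IPM G p₁ p₂ ≥ ε * |LP p₁ g - LP p₂ g|) →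
            ∀ ρ : ℕ, gvcDim (κ + 1) G ≤ (ρ : ℕ∞) →
              (ρ : ℝ) ≥ ε ^ 2 * Real.sqrt (Real.logb 2 n) := by
  have hκ : (0 : ℝ) < κ + 1 := by positivity
  set A : ℕ := (κ + 1) ^ κ with hA
  have hA1 : 1 ≤ A := Nat.one_le_pow _ _ (by omega)
  have hAr : (A : ℝ) = (κ + 1) ^ κ := by rw [hA]; push_cast; rfl
  set γ0 : ℝ := (1 / (2 * (κ + 1))) ^ (κ + 1) / (4 * (κ + 1)) with hγ0
  have hγ0p : 0 < γ0 := by positivity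
  set γ : ℝ := γ0 / (κ + 1) ^ κ with hγ
  have hγp : 0 < γ := by positivity
  obtain ⟨Γ', hΓ'⟩ := exists_nat_ge (1 / γ ^ 2)
  set Γ := Γ' + 1 with hΓdef
  have hΓ : 1 / γ ^ 2 ≤ (Γ : ℝ) := by rw [hΓdef]; push_cast; linarith
  have hΓ1 : 1 ≤ Γ := by omega
  set C := 72 * Γ + A with hC
  set α := 2 * A with hα
  obtain ⟨r0, hr01, hr0⟩ := params Γ C α (4 * ((κ + 1) * A) + 1)
  refine ⟨2 ^ (r0 ^ 2), fun n hn V _ hV => ?_⟩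
  have hn0 : n ≠ 0 := by
    have : 0 < 2 ^ (r0 ^ 2) := by positivity
    omega
  set r := Nat.sqrt (Nat.log 2 n) with hrdef
  have hrr0 : r0 ≤ r := by
    rw [hrdef, Nat.le_sqrt', Nat.le_log_iff_pow_le (by norm_num) hn0]
    exact hn
  obtain ⟨c1, c2, c3, c4⟩ := hr0 r hrr0
  have hr1 : 1 ≤ r := hr01.trans hrr0
  have hnr : 2 ^ (r ^ 2) ≤ n := by
    rw [← Nat.le_log_iff_pow_le (by norm_num) hn0, hrdef]
    exact Nat.sqrt_le' _
  have hsqrt : Real.sqrt (Real.logb 2 n) ≤ 2 * r := by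
    have h1 : Real.logb 2 n ≤ (r + 1 : ℝ) ^ 2 := by
      have h2 : Nat.log 2 n < (r + 1) ^ 2 := Nat.lt_succ_sqrt' _
      have h3 : n < 2 ^ ((r + 1) ^ 2) := Nat.lt_pow_of_log_lt (by norm_num) h2
      rw [Real.logb_le_iff_le_rpow (by norm_num) (by exact_mod_cast Nat.pos_of_ne_zero hn0)]
      have h4 : (n : ℝ) ≤ 2 ^ ((r + 1) ^ 2) := by exact_mod_cast h3.le
      refine h4.trans (le_of_eq ?_)
      rw [← Real.rpow_natCast]
      push_cast
      rfl
    have hr' : (1 : ℝ) ≤ r := by exact_mod_cast hr1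
    calc Real.sqrt (Real.logb 2 n) ≤ Real.sqrt ((r + 1 : ℝ) ^ 2) := Real.sqrt_le_sqrt h1
      _ = r + 1 := Real.sqrt_sq (by positivity)
      _ ≤ 2 * r := by linarith
  set s := r ^ 4 with hs
  set R := 2 * Γ * r with hR
  set B := C * r ^ 2 with hB
  set K := (s + 1) ^ R with hK
  set M := 4 * K * A with hM
  have hs2 : s + 1 ≤ 2 ^ r := le_trans (Nat.le_self_pow (by omega) _) c1
  have hK1 : 1 ≤ K := Nat.one_le_pow _ _ (by omega)
  have hM1 : 1 ≤ M := by rw [hM]; nlinarith [Nat.mul_le_mul hK1 hA1]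
  have hR1 : R ≠ 0 := by rw [hR]; positivity
  have hsK : s + 1 ≤ K := Nat.le_self_pow hR1 _
  have hrs : r ≤ s := Nat.le_self_pow (by norm_num) _
  have hKK : K * K ≤ 2 ^ (r ^ 2) := by
    calc K * K = ((s + 1) ^ (4 * Γ)) ^ r := by rw [hK, ← pow_add, ← pow_mul, hR]; congr 1; ring
      _ ≤ (2 ^ r) ^ r := Nat.pow_le_pow_left c1 r
      _ = 2 ^ (r ^ 2) := by rw [← pow_mul, sq]
  have hsize : (κ + 1) * M + s ≤ n := by
    calc (κ + 1) * M + s ≤ (4 * ((κ + 1) * A)) * K + 1 * K := by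
          have : (κ + 1) * M = (4 * ((κ + 1) * A)) * K := by rw [hM]; ring
          omega
      _ = (4 * ((κ + 1) * A) + 1) * K := by ring
      _ ≤ K * K := by gcongr; omega
      _ ≤ n := hKK.trans hnr
  obtain ⟨F, hF⟩ := counting (κ := κ) (M := M) (s := s) (r := r) (α := α) (R := R) (B := B)
    le_rfl hM1 hs2 (Nat.lt_two_pow_self (n := 2 * A)).le c2 c3
  have hemb : Nonempty (((Fin (κ + 1) × Fin M) ⊕ Fin s) ↪ V) := by
    apply Function.Embedding.nonempty_of_card_le
    rw [hV]
    simpa using hsize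
  obtain ⟨φ⟩ := hemb
  refine ⟨gF φ F, gF_symm φ F, fun ε hε G hG hI ρ hρ => ?_⟩
  by_contra hcon
  push Not at hcon
  obtain ⟨T, hT⟩ := getWK φ φ.injective F G hG ε hε hI hρ
  rw [← hγ0] at hT
  set δ := ε * γ with hδ
  have hδp : 0 < δ := by positivity
  have hη : ε * γ0 = δ * (κ + 1) ^ κ := by rw [hδ, hγ]; field_simp
  have hδ1 : δ ≤ 1 := by
    rcases decC (K' := (s + 1) ^ 0) F T (fun _ _ _ => true) δ (hη ▸ hT) with h | ⟨c, hc⟩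
    · exact h
    · exact absurd hc (hF 0 0 (Nat.zero_le _) (by simp) _ c)
  have hρlt : (ρ : ℝ) < 2 * Γ * r * δ ^ 2 := by
    calc (ρ : ℝ) < ε ^ 2 * Real.sqrt (Real.logb 2 n) := hcon
      _ ≤ ε ^ 2 * (2 * r) := by gcongr
      _ = (1 / γ ^ 2) * (2 * r * δ ^ 2) := by rw [hδ]; field_simp
      _ ≤ Γ * (2 * r * δ ^ 2) := by gcongr
      _ = _ := by ring
  have hρR : ρ ≤ R := by
    have h1 : (ρ : ℝ) < 2 * Γ * r := by
      refine hρlt.trans_le (mul_le_of_le_one_right (by positivity) (pow_le_one₀ hδp.le hδ1))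
    have : (ρ : ℝ) < (R : ℝ) := by rw [hR]; push_cast; exact h1
    exact_mod_cast this.le
  rcases Nat.eq_zero_or_pos ρ with h0 | hpos
  · subst h0
    obtain ⟨c, hc⟩ := decB F T (ε * γ0) (by positivity) (pow_zero _) hT
    refine hF 0 _ (Nat.zero_le _) ?_ T c hc
    have : 1 ≤ r ^ 2 := Nat.one_le_pow _ _ hr1
    rw [hB, hC, ← hA]
    nlinarith
  · obtain ⟨m, hm1, hm2⟩ := boost_m s r hr1 hs2 δ hδp hδ1
    obtain ⟨c, hc⟩ := decA F T δ hδp hδ1 (by positivity) (hη ▸ hT) hm1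
    refine hF ρ m hρR ?_ T c hc
    have h1 : (m : ℝ) * ρ ≤ 36 * Γ * r ^ 2 := by
      calc (m : ℝ) * ρ ≤ m * (2 * Γ * r * δ ^ 2) := by gcongr
        _ = (m * δ ^ 2) * (2 * Γ * r) := by ring
        _ ≤ (18 * r) * (2 * Γ * r) := by gcongr
        _ = _ := by ring
    have h2 : m * ρ ≤ 36 * Γ * r ^ 2 := by exact_mod_cast h1
    have h3 : m ≤ m * ρ := Nat.le_mul_of_pos_right m hpos
    calc m * (ρ + 1) = m * ρ + m := by ring
      _ ≤ m * ρ + m * ρ := Nat.add_le_add_left h3 _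
      _ ≤ 36 * Γ * r ^ 2 + 36 * Γ * r ^ 2 := Nat.add_le_add h2 h2
      _ = 72 * Γ * r ^ 2 := by ring
      _ ≤ B := by rw [hB, hC]; exact Nat.mul_le_mul_right _ (Nat.le_add_right _ _)

/-- expressiveness over finite domains, `k`-ary case
(Theorem `main_expressive_finite_k`). -/
theorem stmt13 :
    ∃ c : ℝ, 0 < c ∧
      ∀ k : ℕ, 2 ≤ k → ∃ N : ℕ, ∀ n : ℕ, N ≤ n →
        ∀ (V : Type) [Fintype V], Fintype.card V = n →
          ∃ g : (Fin k → V) → Bool, IsSymmetric g ∧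
            ∀ ε : ℝ, 0 < ε →
              ∀ G : Set ((Fin (k - 1) → V) → Bool), IsDistinguishingClass G →
                (∀ p₁ p₂ : V → ℝ, IsDist p₁ → IsDist p₂ →
                  IPM G p₁ p₂ ≥ ε * |LP p₁ g - LP p₂ g|) →
                ∀ ρ : ℕ, gvcDim (k - 1) G ≤ (ρ : ℕ∞) →
                  (ρ : ℝ) ≥ c * (ε ^ 2 / (k : ℝ) ^ 2) * Real.sqrt (Real.logb 2 n) := by
  refine ⟨1, one_pos, fun k hk => ?_⟩
  obtain ⟨κ, rfl⟩ : ∃ κ, k = κ + 2 := ⟨k - 2, by omega⟩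
  obtain ⟨N, hN⟩ := core κ
  refine ⟨N, fun n hn V _ hV => ?_⟩
  obtain ⟨g, hg, h⟩ := hN n hn V hV
  refine ⟨g, hg, fun ε hε G hG hI ρ hρ => ?_⟩
  refine le_trans ?_ (h ε hε G hG hI ρ hρ)
  rw [one_mul]
  refine mul_le_mul_of_nonneg_right ?_ (Real.sqrt_nonneg _)
  apply div_le_self (by positivity)
  push_cast
  have : (0 : ℝ) ≤ κ := Nat.cast_nonneg _
  nlinarith

end GraphDisc
end

section
/- There exists an absolute constant c > 0 such that the following holds for every n large enough. Let V be a finite vertex set with |V| = n. There exists a single symmetric Boolean function g : V × V → {0,1} (a 2-distinguisher) such that for every ε > 0 and every family D of Boolean functions on V with VC dimension ρ ≥ 1: if for all probability distributions p₁, p₂ on V one has IPM_D(p₁,p₂) ≥ ε·|L_{p₁}(g) − L_{p₂}(g)|, then log₂ n ≤ c·(ρ/ε²)·log²(ρ/ε²). -/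
open scoped BigOperators

namespace GraphDisc

lemma sum_choose_le_s14 (m : ℕ) : ∀ r : ℕ, ∑ i ∈ Finset.Iic r, m.choose i ≤ (m + 1) ^ r := by
  intro r
  induction r with
  | zero => simp [show Finset.Iic 0 = ({0} : Finset ℕ) from rfl]
  | succ r ih =>
    have h1 : Finset.Iic (r + 1) = insert (r + 1) (Finset.Iic r) := by
      ext x; simp; omega
    rw [h1, Finset.sum_insert (by simp)]
    have h2 : m.choose (r + 1) ≤ m ^ (r + 1) := Nat.choose_le_pow _ _
    have h3 : m ^ r ≤ (m + 1) ^ r := Nat.pow_le_pow_left (by omega) r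
    calc _ ≤ m ^ (r + 1) + (m + 1) ^ r := by omega
      _ ≤ m * (m + 1) ^ r + (m + 1) ^ r := by rw [pow_succ']; gcongr
      _ = _ := by ring

/-- signed sum -/
noncomputable def phi {k : ℕ} (f : Fin k × Bool → Bool) (s : Fin k → Bool) : ℝ :=
  ∑ i, ((if f (i, s i) then (1 : ℝ) else 0) - (if f (i, !(s i)) then 1 else 0))

lemma mgf_le {k : ℕ} (f : Fin k × Bool → Bool) (l : ℝ) :
    ∑ s : Fin k → Bool, Real.exp (l * phi f s) ≤ 2 ^ k * Real.exp (l ^ 2 / 2 * k) := by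
  have h : ∀ s : Fin k → Bool, Real.exp (l * phi f s) = ∏ i,
      Real.exp (l * ((if f (i, s i) then (1 : ℝ) else 0) - (if f (i, !(s i)) then 1 else 0))) := by
    intro s
    rw [← Real.exp_sum, phi, Finset.mul_sum]
  simp_rw [h]
  have h2 := Finset.prod_univ_sum (fun _ : Fin k => (Finset.univ : Finset Bool))
    (fun i b => Real.exp (l * ((if f (i, b) then (1 : ℝ) else 0) - (if f (i, !b) then 1 else 0))))
  rw [Fintype.piFinset_univ] at h2
  rw [← h2]
  have h3 : ∀ i ∈ (Finset.univ : Finset (Fin k)), ∑ b : Bool,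
      Real.exp (l * ((if f (i, b) then (1 : ℝ) else 0) - (if f (i, !b) then 1 else 0)))
      ≤ 2 * Real.exp (l ^ 2 / 2) := by
    intro i _
    have hc := Real.cosh_le_exp_half_sq l
    rw [Real.cosh_eq] at hc
    have h1 : 1 ≤ Real.exp (l ^ 2 / 2) := Real.one_le_exp (by positivity)
    simp only [Fintype.sum_bool, Bool.not_true, Bool.not_false]
    cases f (i, true) <;> cases f (i, false) <;> simp <;> linarith
  refine (Finset.prod_le_prod (fun i _ => by positivity) h3).trans ?_
  rw [Finset.prod_const, Finset.card_univ, Fintype.card_fin, mul_pow, ← Real.exp_nat_mul]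
  apply le_of_eq; ring_nf

lemma exists_sign {k : ℕ} (F : Finset (Finset (Fin k × Bool))) (l : ℝ) :
    ∃ s : Fin k → Bool, ∀ T ∈ F,
      Real.exp (l * |phi (fun a => decide (a ∈ T)) s|) ≤ 2 * F.card * Real.exp (l ^ 2 / 2 * k) := by
  let h : (Fin k → Bool) → ℝ := fun s => ∑ T ∈ F,
    (Real.exp (l * phi (fun a => decide (a ∈ T)) s)
      + Real.exp (-l * phi (fun a => decide (a ∈ T)) s))
  have hs : ∑ s, h s ≤ ∑ s : Fin k → Bool, 2 * F.card * Real.exp (l ^ 2 / 2 * k) := by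
    simp only [h]
    rw [Finset.sum_comm]
    simp_rw [Finset.sum_add_distrib]
    have h1 : ∑ T ∈ F, ∑ s : Fin k → Bool, Real.exp (l * phi (fun a => decide (a ∈ T)) s)
        ≤ ∑ T ∈ F, 2 ^ k * Real.exp (l ^ 2 / 2 * k) :=
      Finset.sum_le_sum fun T _ => mgf_le _ l
    have h2 : ∑ T ∈ F, ∑ s : Fin k → Bool, Real.exp (-l * phi (fun a => decide (a ∈ T)) s)
        ≤ ∑ T ∈ F, 2 ^ k * Real.exp ((-l) ^ 2 / 2 * k) :=
      Finset.sum_le_sum fun T _ => mgf_le _ (-l)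
    rw [neg_sq] at h2
    simp only [Finset.sum_const, Finset.card_univ, Fintype.card_fun, Fintype.card_bool,
      Fintype.card_fin, nsmul_eq_mul] at *
    push_cast
    linarith
  obtain ⟨s, _, hs⟩ := Finset.exists_le_of_sum_le Finset.univ_nonempty hs
  refine ⟨s, fun T hT => le_trans ?_ hs⟩
  have := Finset.single_le_sum (s := F) (f := fun T =>
    (Real.exp (l * phi (fun a => decide (a ∈ T)) s)
      + Real.exp (-l * phi (fun a => decide (a ∈ T)) s))) (fun _ _ => by positivity) hT
  refine le_trans ?_ this
  rcases abs_cases (phi (fun a => decide (a ∈ T)) s) with ⟨h, _⟩ | ⟨h, _⟩ <;> rw [h]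
  · have := Real.exp_pos (-l * phi (fun a => decide (a ∈ T)) s)
    linarith
  · have := Real.exp_pos (l * phi (fun a => decide (a ∈ T)) s)
    rw [mul_neg, ← neg_mul]
    linarith

open Classical in
/-- push-forward of a weight -/
noncomputable def push {V J : Type*} [Fintype J] (w : J → ℝ) (x : J → V) : V → ℝ :=
  fun v => ∑ j, if v = x j then w j else 0

lemma push_sum {V J : Type*} [Fintype V] [Fintype J] (w : J → ℝ) (x : J → V) (f : V → ℝ) :
    ∑ v, push w x v * f v = ∑ j, w j * f (x j) := by
  classical
  simp only [push, Finset.sum_mul]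
  rw [Finset.sum_comm]
  refine Finset.sum_congr rfl fun j _ => ?_
  simp [ite_mul]

lemma push_isDist {V J : Type*} [Fintype V] [Fintype J] (w : J → ℝ) (x : J → V)
    (hw : ∀ j, 0 ≤ w j) (h1 : ∑ j, w j = 1) : IsDist (push w x) := by
  classical
  refine ⟨fun v => Finset.sum_nonneg fun j _ => by split_ifs; exacts [hw j, le_rfl], ?_⟩
  have := push_sum w x (fun _ => 1)
  simp only [mul_one] at this
  rw [← h1, ← this]
  exact hasSum_fintype _

lemma LP1_push {V J : Type*} [Fintype V] [Fintype J] (w : J → ℝ) (x : J → V) (d : V → Bool) :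
    LP1 (push w x) d = ∑ j, w j * (if d (x j) then 1 else 0) := by
  rw [LP1, tsum_fintype, push_sum w x (fun v => if d v then 1 else 0)]

lemma LP2_push {V J : Type*} [Fintype V] [Fintype J] (w : J → ℝ) (x : J → V) (g : V → V → Bool) :
    LP2 (push w x) g = ∑ j, w j * ∑ j', w j' * (if g (x j) (x j') then 1 else 0) := by
  rw [LP2, tsum_fintype, Fintype.sum_prod_type]
  simp_rw [mul_assoc, ← Finset.mul_sum]
  rw [push_sum w x (fun v => ∑ u, push w x u * (if g v u then 1 else 0))]
  refine Finset.sum_congr rfl fun j _ => ?_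
  rw [push_sum w x (fun u => if g (x j) u then 1 else 0)]

/-- weights -/
noncomputable def wt (k : ℕ) : Option (Fin k) → ℝ
  | none => 1 / 2
  | some _ => 1 / (2 * k)

/-- points -/
def pt {V : Type*} {k : ℕ} (e : (Fin k × Bool) ⊕ (Fin k → Bool) → V) (s : Fin k → Bool)
    (b : Bool) : Option (Fin k) → V
  | none => e (Sum.inr s)
  | some i => e (Sum.inl (i, xor (s i) b))

open Classical in
/-- the graph -/
noncomputable def gr {V : Type*} {k : ℕ} (e : (Fin k × Bool) ⊕ (Fin k → Bool) → V) :
    V → V → Bool := fun x y => decide (∃ (i : Fin k) (s : Fin k → Bool),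
      (x = e (Sum.inl (i, s i)) ∧ y = e (Sum.inr s)) ∨ (y = e (Sum.inl (i, s i)) ∧ x = e (Sum.inr s)))

lemma gr_symm {V : Type*} {k : ℕ} (e : (Fin k × Bool) ⊕ (Fin k → Bool) → V) (x y : V) :
    gr e x y = gr e y x := by
  unfold gr
  congr 1
  simp only [eq_iff_iff]
  constructor <;> rintro ⟨i, s, h⟩ <;> exact ⟨i, s, h.symm⟩

lemma card_patterns {V : Type*} {k ρ : ℕ} (e : (Fin k × Bool) ⊕ (Fin k → Bool) → V)
    (he : Function.Injective e) (D : Set (V → Bool)) (hD : vcDim D = (ρ : ℕ∞))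
    (F : Finset (Finset (Fin k × Bool)))
    (hF : ∀ T, T ∈ F → ∃ d ∈ D, ∀ a, a ∈ T ↔ d (e (Sum.inl a)) = true) :
    F.card ≤ (2 * k + 1) ^ ρ := by
  classical
  have hv : F.vcDim ≤ ρ := by
    refine Finset.sup_le fun S hS => ?_
    rw [Finset.mem_shatterer] at hS
    have hsh : Shatters D (S.map ⟨fun a => e (Sum.inl a), fun a b h => Sum.inl_injective (he h)⟩) := by
      intro f
      obtain ⟨u, hu, hu2⟩ := hS (t := S.filter fun a => f (e (Sum.inl a)) = true)
        (Finset.filter_subset _ _)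
      obtain ⟨d, hd, hd2⟩ := hF u hu
      refine ⟨d, hd, ?_⟩
      intro x hx
      simp only [Finset.mem_map, Function.Embedding.coeFn_mk] at hx
      obtain ⟨a, ha, rfl⟩ := hx
      have h1 := Finset.ext_iff.1 hu2 a
      simp only [Finset.mem_inter, Finset.mem_filter, ha, true_and, hd2] at h1
      exact Bool.eq_iff_iff.2 h1
    have h2 : ((S.map ⟨fun a => e (Sum.inl a), fun a b h => Sum.inl_injective (he h)⟩ :
        Finset V).card : ℕ∞) ≤ vcDim D := by
      unfold vcDim
      exact le_iSup₂_of_le _ hsh le_rfl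
    rw [hD, Finset.card_map] at h2
    exact_mod_cast h2
  have h1 := F.card_le_card_shatterer.trans Finset.card_shatterer_le_sum_vcDim
  have h2 := sum_choose_le_s14 (Fintype.card (Fin k × Bool)) F.vcDim
  have h3 : Fintype.card (Fin k × Bool) + 1 = 2 * k + 1 := by simp; ring
  rw [h3] at h2
  exact (h1.trans h2).trans (Nat.pow_le_pow_right (by omega) hv)

lemma core_s14 {V : Type*} [Fintype V] {k : ℕ} (hk : 1 ≤ k)
    (e : (Fin k × Bool) ⊕ (Fin k → Bool) → V) (he : Function.Injective e)
    (ε : ℝ) (hε : 0 < ε) (D : Set (V → Bool)) (ρ : ℕ) (hρ : 1 ≤ ρ) (hD : vcDim D = (ρ : ℕ∞))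
    (H : ∀ p₁ p₂ : V → ℝ, IsDist p₁ → IsDist p₂ →
      IPM1 D p₁ p₂ ≥ ε * |LP2 p₁ (gr e) - LP2 p₂ (gr e)|) :
    (k : ℝ) ≤ 4 * (ρ / ε ^ 2) * Real.log (2 * k + 1) := by
  classical
  have hk0 : (1 : ℝ) ≤ k := by exact_mod_cast hk
  let F : Finset (Finset (Fin k × Bool)) := Finset.univ.filter
    fun T => ∃ d ∈ D, ∀ a, a ∈ T ↔ d (e (Sum.inl a)) = true
  have hFc := card_patterns e he D hD F (fun T hT => (Finset.mem_filter.1 hT).2)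
  obtain ⟨s, hs⟩ := exists_sign F ε
  let x := fun b => pt e s b
  have hw0 : ∀ j, 0 ≤ wt k j := by rintro (_ | i) <;> simp [wt]
  have hw1 : ∑ j, wt k j = 1 := by
    simp [Fintype.sum_option, wt]; field_simp; norm_num
  have hH := H (push (wt k) (x false)) (push (wt k) (x true))
    (push_isDist _ _ hw0 hw1) (push_isDist _ _ hw0 hw1)
  have g1 : gr e (e (Sum.inr s)) (e (Sum.inr s)) = false := by
    simp [gr, he.eq_iff]
  have g2 : ∀ a a', gr e (e (Sum.inl a)) (e (Sum.inl a')) = false := by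
    intro a a'; simp [gr, he.eq_iff]
  have g3 : ∀ i b, gr e (e (Sum.inl (i, xor (s i) b))) (e (Sum.inr s)) = !b := by
    intro i b
    rw [Bool.eq_iff_iff]
    simp only [gr, he.eq_iff, decide_eq_true_eq, Sum.inl.injEq, Sum.inr.injEq, Prod.mk.injEq,
      reduceCtorEq, and_false, false_and, or_false]
    constructor
    · rintro ⟨i', s', ⟨rfl, h⟩, rfl⟩
      cases hb : b <;> simp_all
    · intro h
      refine ⟨i, s, ⟨rfl, ?_⟩, rfl⟩
      cases hb : b <;> simp_all
  have L : ∀ b, LP2 (push (wt k) (x b)) (gr e) = if b then 0 else 1 / 2 := by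
    intro b
    rw [LP2_push]
    simp only [Fintype.sum_option, x, pt, g1, g2, g3, gr_symm e (e (Sum.inr s)) (e (Sum.inl _)), wt]
    cases b
    · simp; field_simp; norm_num
    · simp
  rw [L, L] at hH
  -- upper bound on the IPM
  have hlog : 0 ≤ Real.log (2 * k + 1) := Real.log_nonneg (by linarith)
  have hρ1 : (1 : ℝ) ≤ ρ := by exact_mod_cast hρ
  have hub : IPM1 D (push (wt k) (x false)) (push (wt k) (x true)) ≤
      1 / (2 * k) * ((2 * ρ * Real.log (2 * k + 1) + ε ^ 2 / 2 * k) / ε) := by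
    have hB : 0 ≤ 1 / (2 * (k : ℝ)) * ((2 * ρ * Real.log (2 * k + 1) + ε ^ 2 / 2 * k) / ε) := by
      positivity
    refine Real.iSup_le (fun d => Real.iSup_le (fun hd => ?_) hB) hB
    let T : Finset (Fin k × Bool) := Finset.univ.filter fun a => d (e (Sum.inl a)) = true
    have hT : T ∈ F := by
      simp only [F, Finset.mem_filter, Finset.mem_univ, true_and]
      exact ⟨d, hd, by simp [T]⟩
    have h1 := hs T hT
    have hphi : LP1 (push (wt k) (x false)) d - LP1 (push (wt k) (x true)) d
        = 1 / (2 * k) * phi (fun a => decide (a ∈ T)) s := by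
      rw [LP1_push, LP1_push]
      simp only [Fintype.sum_option, x, pt, wt, phi, T, Finset.mem_filter, Finset.mem_univ,
        true_and, Finset.mul_sum, decide_eq_true_eq, Bool.xor_false, Bool.xor_true, mul_sub,
        Finset.sum_sub_distrib]
      ring
    rw [hphi, abs_mul, abs_of_nonneg (by positivity : 0 ≤ 1 / (2 * (k : ℝ)))]
    refine mul_le_mul_of_nonneg_left ?_ (by positivity)
    rw [le_div_iff₀ hε, mul_comm]
    have h2 : Real.exp (ε * |phi (fun a => decide (a ∈ T)) s|) ≤
        (2 * k + 1 : ℝ) ^ (2 * ρ) * Real.exp (ε ^ 2 / 2 * k) := by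
      refine h1.trans (mul_le_mul_of_nonneg_right ?_ (Real.exp_nonneg _))
      have h3 : (F.card : ℝ) ≤ (2 * k + 1 : ℝ) ^ ρ := by exact_mod_cast hFc
      have h4 : (2 : ℝ) ≤ (2 * k + 1 : ℝ) ^ ρ := by
        calc (2 : ℝ) ≤ (2 * k + 1 : ℝ) ^ 1 := by linarith
          _ ≤ _ := pow_le_pow_right₀ (by linarith) hρ
      rw [two_mul ρ, pow_add]
      exact mul_le_mul h4 h3 (Nat.cast_nonneg _) (by positivity)
    have h5 := Real.log_le_log (Real.exp_pos _) h2
    rw [Real.log_exp, Real.log_mul (by positivity) (by positivity), Real.log_exp, Real.log_pow] at h5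
    push_cast at h5
    exact h5
  have h6 := le_trans hH hub
  simp only [Bool.false_eq_true, if_false, if_true, sub_zero] at h6
  rw [abs_of_pos (by norm_num : (0 : ℝ) < 1 / 2), div_mul_div_comm, one_mul,
    le_div_iff₀ (by positivity)] at h6
  rw [mul_div_assoc', div_mul_eq_mul_div, le_div_iff₀ (by positivity)]
  nlinarith

lemma final_arith : ∃ K : ℕ, ∀ k : ℕ, K ≤ k → ∀ X : ℝ, 0 < X →
    (k : ℝ) ≤ 4 * X * Real.log (2 * k + 1) → (k : ℝ) + 2 ≤ 100 * X * (Real.log X) ^ 2 := by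
  have h0 : ∀ᶠ y : ℝ in Filter.atTop, Real.log y ≤ 1 / 8 * y ^ (1 / 2 : ℝ) := by
    have := (isLittleO_log_rpow_atTop (by norm_num : (0 : ℝ) < 1 / 2)).bound
      (by norm_num : (0 : ℝ) < 1 / 8)
    filter_upwards [this, Filter.eventually_ge_atTop 1] with y hy h1
    rw [Real.norm_eq_abs, Real.norm_eq_abs, abs_of_nonneg (Real.log_nonneg h1),
      abs_of_nonneg (by positivity)] at hy
    exact hy
  obtain ⟨Y, hY⟩ := Filter.eventually_atTop.1 h0
  obtain ⟨K, hK⟩ := exists_nat_ge Y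
  refine ⟨max K 9, fun k hk X hX hkX => ?_⟩
  have hkK : (K : ℝ) ≤ k := by exact_mod_cast (le_max_left K 9).trans hk
  have hk9 : (9 : ℝ) ≤ k := by exact_mod_cast (le_max_right K 9).trans hk
  have h1 := hY (2 * k + 1) (by linarith)
  rw [← Real.sqrt_eq_rpow] at h1
  have hsq : Real.sqrt (2 * k + 1) ≤ 2 * Real.sqrt k := by
    rw [Real.sqrt_le_left (by positivity), mul_pow, Real.sq_sqrt (by positivity)]; linarith
  have hk2 : Real.sqrt k * Real.sqrt k = k := Real.mul_self_sqrt (by positivity)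
  have hkp : 0 < Real.sqrt k := Real.sqrt_pos.2 (by linarith)
  have hsX : Real.sqrt k ≤ X := by
    have : Real.sqrt k * Real.sqrt k ≤ X * Real.sqrt k := by
      rw [hk2]; nlinarith
    exact le_of_mul_le_mul_right this hkp
  have h3 : (3 : ℝ) ≤ X := by
    refine le_trans ?_ hsX
    apply Real.le_sqrt_of_sq_le; linarith
  have hkX2 : (k : ℝ) ≤ X ^ 2 := by nlinarith
  have hl1 : 1 ≤ Real.log X := by
    rw [Real.le_log_iff_exp_le hX]
    linarith [Real.exp_one_lt_d9]
  have hl : Real.log (2 * k + 1) ≤ 3 * Real.log X := by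
    have : Real.log (2 * k + 1) ≤ Real.log (X ^ 3) :=
      Real.log_le_log (by positivity) (by nlinarith)
    rw [Real.log_pow] at this
    exact_mod_cast this
  have h7 : (k : ℝ) ≤ 12 * X * Real.log X := by
    have := mul_le_mul_of_nonneg_left hl (by positivity : 0 ≤ 4 * X)
    linarith
  have h8 : X * Real.log X ≤ X * Real.log X ^ 2 := by
    apply mul_le_mul_of_nonneg_left _ hX.le
    nlinarith
  nlinarith

/-- expressiveness over finite domains, graph case
(Theorem `main_expressive_finite_1`). -/
theorem stmt14 :
    ∃ c : ℝ, 0 < c ∧ ∃ N : ℕ, ∀ n : ℕ, N ≤ n →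
      ∀ (V : Type) [Fintype V], Fintype.card V = n →
        ∃ g : V → V → Bool, (∀ x y, g x y = g y x) ∧
          ∀ ε : ℝ, 0 < ε →
            ∀ D : Set (V → Bool), ∀ ρ : ℕ, 1 ≤ ρ → vcDim D = (ρ : ℕ∞) →
              (∀ p₁ p₂ : V → ℝ, IsDist p₁ → IsDist p₂ →
                IPM1 D p₁ p₂ ≥ ε * |LP2 p₁ g - LP2 p₂ g|) →
              Real.logb 2 n ≤ c * ((ρ : ℝ) / ε ^ 2) * (Real.log ((ρ : ℝ) / ε ^ 2)) ^ 2 := by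
  obtain ⟨K, hK⟩ := final_arith
  refine ⟨100, by norm_num, 2 ^ (K + 4), fun n hn V _ hV => ?_⟩
  have hn0 : n ≠ 0 := by
    have : 0 < 2 ^ (K + 4) := by positivity
    omega
  have hlog : K + 4 ≤ Nat.log 2 n := Nat.le_log_of_pow_le (by norm_num) hn
  obtain ⟨k, hk⟩ : ∃ k, Nat.log 2 n = k + 1 := ⟨Nat.log 2 n - 1, by omega⟩
  have hn1 : 2 ^ (k + 1) ≤ n := hk ▸ Nat.pow_log_le_self 2 hn0
  have hn2 : n < 2 ^ (k + 2) := by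
    have := Nat.lt_pow_succ_log_self (b := 2) (by norm_num) n
    rwa [hk] at this
  have h2k : 2 * k ≤ 2 ^ k := by
    obtain ⟨j, rfl⟩ : ∃ j, k = j + 1 := ⟨k - 1, by omega⟩
    have : j < 2 ^ j := Nat.lt_two_pow_self
    rw [pow_succ]; omega
  have hcard : Fintype.card ((Fin k × Bool) ⊕ (Fin k → Bool)) ≤ Fintype.card V := by
    rw [hV]
    simp only [Fintype.card_sum, Fintype.card_prod, Fintype.card_fin, Fintype.card_bool,
      Fintype.card_fun]
    rw [pow_succ] at hn1
    omega
  obtain ⟨e⟩ := Function.Embedding.nonempty_of_card_le hcard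
  refine ⟨gr e, gr_symm e, fun ε hε D ρ hρ hD H => ?_⟩
  have hc := core_s14 (by omega) e e.injective ε hε D ρ hρ hD H
  have hρ1 : (1 : ℝ) ≤ ρ := by exact_mod_cast hρ
  have hf := hK k (by omega) (ρ / ε ^ 2) (by positivity) hc
  refine le_trans ?_ hf
  rw [Real.logb_le_iff_le_rpow (by norm_num) (by positivity)]
  have : (n : ℝ) ≤ 2 ^ (k + 2) := by exact_mod_cast hn2.le
  refine this.trans (le_of_eq ?_)
  rw [← Real.rpow_natCast]
  push_cast
  rfl

end GraphDisc
end
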